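/- There exists a universal constant C ∈ (0,∞) with the following property. Let q ∈ [2,∞) and n ∈ ℕ satisfy n ≥ q². Let (X,‖·‖_X) and (Y,‖·‖_Y) be Banach spaces with dim(X)=n and m_q(Y)<∞. Then every compactly supported 1-Lipschitz function f:X→Y satisfies (∫_X ∫_0^∞ inf_{Λ ∈ A(X,Y), ‖Λ‖_{Lip(X,Y)}≤1} fint_{x+tB_X} ‖f(y)−Λ(y)‖_Y^q / t^{q+1} dy dt dx)^{1/q} ≤ C·n^{9/20}·(log n)^{1/5}·m_q(Y)·|supp(f)|^{1/q}. -/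

import Mathlib

open MeasureTheory Metric Set ENNReal

noncomputable section

universe u

/-- `N` is a norm on the real vector space `V`. -/
def IsNorm {V : Type*} [AddCommGroup V] [Module ℝ V] (N : V → ℝ) : Prop :=
  (∀ x, N x = 0 → x = 0) ∧ (∀ (a : ℝ) (x : V), N (a • x) = |a| * N x) ∧
    (∀ x y : V, N (x + y) ≤ N x + N y)

/-- `m` is an upper bound for the martingale cotype `q` constant `𝔪_q(Y)` of `Y`. -/
def MartCotypeBound (q : ℝ) (Y : Type*) [NormedAddCommGroup Y] [NormedSpace ℝ Y]
    [CompleteSpace Y] (m : ℝ) : Prop :=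
  ∀ (Ω : Type) [MeasurableSpace Ω] (μ : Measure Ω) [IsProbabilityMeasure μ]
    (ℱ : Filtration ℕ ‹MeasurableSpace Ω›) (M : ℕ → Ω → Y), Martingale M ℱ μ →
    ∀ B : ℝ≥0∞, (∀ k, ∫⁻ ω, (‖M k ω‖₊ : ℝ≥0∞) ^ q ∂μ ≤ B) →
      ∑' k : ℕ, ∫⁻ ω, (‖M (k + 1) ω - M k ω‖₊ : ℝ≥0∞) ^ q ∂μ ≤ ENNReal.ofReal m ^ q * B

/-!
Let `ξ` be uniform on the unit ball of the `n`-dimensional space, let `b = max 4 n`, and average a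
smooth approximation `g` of `f` along a random walk with steps `a i • ξ`, where `a i = s * b ^ i`.
Run backwards from the coarsest scale, the iterated means of the derivative of `g` in a fixed
direction, evaluated along the walk, form a martingale. Martingale cotype therefore bounds, with no
dependence on the number of scales, the sum of the `q`-th powers of its `L_q` increments; Lebesgue
measure is reached as an initial law by conditioning on sets of finite measure.

Since `a (i + 1) ≥ n * a i`, two balls of radius `a (i + 1)` whose centres differ by at most `a i`
share at least half of their volume, by Bernoulli's inequality. The increments of the martingale
therefore also control how much the averaged derivative changes under shifts of size `a i`, that is,
the error at scale `a i` of the first-order Taylor polynomials of the averaged function. These are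
affine and `1`-Lipschitz, because averaging does not increase the norm of the derivative. Ball
averages annihilate the linear term, so the same errors control the distance from the `i`-th
iterated mean to the next one; relative to the scale, the distance to `f` itself contracts by a
factor `2` per step.

Integrating over the initial scale `s` in one period, of length `log b` with respect to `ds / s`,
gives the estimate with `(log b) ^ (1 / q)`. Since `1 / q ≤ 1 / 2`, this is at most
`n ^ (9 / 20) * (log n) ^ (1 / 5)`.
-/

namespace Dorronsoro

open ProbabilityTheory Filter Topology
open scoped NNReal BoundedContinuousFunction

section LpInequalities

variable {α : Type*} [MeasurableSpace α] {Z : Type*} [NormedAddCommGroup Z]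

lemma enorm_integral_rpow_le [NormedSpace ℝ Z] (P : Measure α) [IsProbabilityMeasure P]
    {g : α → Z} (hg : AEStronglyMeasurable g P) {q : ℝ} (hq : 1 ≤ q) :
    ‖∫ a, g a ∂P‖ₑ ^ q ≤ ∫⁻ a, ‖g a‖ₑ ^ q ∂P := by
  have hq0 : 0 < q := by linarith
  have exponent_mono := eLpNorm'_le_eLpNorm'_of_exponent_le (p := 1) (q := q) one_pos hq P hg
  simp only [eLpNorm', ENNReal.rpow_one, one_div, inv_one] at exponent_mono
  calc ‖∫ a, g a ∂P‖ₑ ^ q ≤ ((∫⁻ a, ‖g a‖ₑ ^ q ∂P) ^ q⁻¹) ^ q :=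
        ENNReal.rpow_le_rpow ((enorm_integral_le_lintegral_enorm g).trans exponent_mono) hq0.le
    _ = _ := by rw [← ENNReal.rpow_mul, inv_mul_cancel₀ hq0.ne', ENNReal.rpow_one]

lemma add_rpow_le_two_rpow_mul (a b : ℝ≥0∞) {q : ℝ} (hq : 1 ≤ q) :
    (a + b) ^ q ≤ 2 ^ q * (a ^ q + b ^ q) :=
  (ENNReal.rpow_add_le_mul_rpow_add_rpow a b hq).trans <| by
    gcongr
    · norm_num
    · linarith

lemma enorm_sub_rpow_le (x y z : Z) {q : ℝ} (hq : 1 ≤ q) :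
    ‖x - z‖ₑ ^ q ≤ 2 ^ q * (‖x - y‖ₑ ^ q + ‖y - z‖ₑ ^ q) := by
  calc ‖x - z‖ₑ ^ q ≤ (‖x - y‖ₑ + ‖y - z‖ₑ) ^ q := by
        gcongr
        rw [← sub_add_sub_cancel x y z]
        exact enorm_add_le _ _
    _ ≤ _ := add_rpow_le_two_rpow_mul _ _ hq

lemma lintegral_enorm_sub_rpow_le (μ : Measure α) (F : α → Z) {G H : α → Z} {q : ℝ} (hq : 1 ≤ q)
    (hGH : AEMeasurable (fun a => ‖G a - H a‖ₑ ^ q) μ) :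
    ∫⁻ a, ‖F a - H a‖ₑ ^ q ∂μ
      ≤ 2 ^ q * (∫⁻ a, ‖F a - G a‖ₑ ^ q ∂μ + ∫⁻ a, ‖G a - H a‖ₑ ^ q ∂μ) := by
  rw [← lintegral_add_right' _ hGH, ← lintegral_const_mul' _ _ (by finiteness)]
  exact lintegral_mono fun a => enorm_sub_rpow_le _ _ _ hq

end LpInequalities

lemma integrable_boundedContinuous_comp {α E Z : Type*} [MeasurableSpace α] {P : Measure α}
    [IsFiniteMeasure P] [NormedAddCommGroup E] [MeasurableSpace E] [BorelSpace E]
    [SecondCountableTopology E] [NormedAddCommGroup Z] (F : E →ᵇ Z) {g : α → E}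
    (hg : Measurable g) : Integrable (fun a => F (g a)) P :=
  .of_bound (F.continuous.stronglyMeasurable.comp_measurable hg).aestronglyMeasurable ‖F‖
    (ae_of_all _ fun _ => F.norm_coe_le_norm _)

section DilatedMean

variable {E : Type*} [NormedAddCommGroup E] [NormedSpace ℝ E] [MeasurableSpace E] [BorelSpace E]
  [SecondCountableTopology E] (ν : Measure E) [IsProbabilityMeasure ν]
variable {Z : Type*} [NormedAddCommGroup Z] [NormedSpace ℝ Z]
variable {W : Type*} [NormedAddCommGroup W] [NormedSpace ℝ W]

/-- The average `x ↦ ∫ F (x + r • ξ) dν(ξ)` of `F` over the dilate of `ν` by the factor `r`. -/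
def dilatedMean (r : ℝ) (F : E →ᵇ Z) : E →ᵇ Z :=
  .ofNormedAddCommGroup (fun x => ∫ ξ, F (x + r • ξ) ∂ν)
    (continuous_of_dominated (bound := fun _ => ‖F‖)
      (fun _ => (integrable_boundedContinuous_comp F (by fun_prop)).1)
      (fun _ => ae_of_all _ fun _ => F.norm_coe_le_norm _) (integrable_const _)
      (ae_of_all _ fun _ => by fun_prop))
    ‖F‖ fun _ => by
      simpa using norm_integral_le_of_norm_le_const (μ := ν)
        (ae_of_all _ fun _ => F.norm_coe_le_norm _)

lemma dilatedMean_apply (r : ℝ) (F : E →ᵇ Z) (x : E) :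
    dilatedMean ν r F x = ∫ ξ, F (x + r • ξ) ∂ν := rfl

lemma norm_dilatedMean_le (r : ℝ) (F : E →ᵇ Z) : ‖dilatedMean ν r F‖ ≤ ‖F‖ :=
  BoundedContinuousFunction.norm_ofNormedAddCommGroup_le _ (norm_nonneg _) _

lemma dilatedMean_zero [CompleteSpace Z] (F : E →ᵇ Z) : dilatedMean ν 0 F = F := by
  ext x
  simp [dilatedMean_apply]

/-- The average of `F` over a random walk whose independent steps have the laws of
`a 0 • ξ, …, a (i - 1) • ξ` with `ξ ∼ ν`. -/
def iteratedMean (a : ℕ → ℝ) (F : E →ᵇ Z) : ℕ → E →ᵇ Z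
  | 0 => F
  | i + 1 => dilatedMean ν (a i) (iteratedMean a F i)

lemma iteratedMean_succ_apply (a : ℕ → ℝ) (F : E →ᵇ Z) (i : ℕ) (x : E) :
    iteratedMean ν a F (i + 1) x = ∫ ξ, iteratedMean ν a F i (x + a i • ξ) ∂ν := rfl

lemma norm_iteratedMean_le (a : ℕ → ℝ) (F : E →ᵇ Z) (i : ℕ) : ‖iteratedMean ν a F i‖ ≤ ‖F‖ := by
  induction i with
  | zero => exact le_rfl
  | succ i ih => exact (norm_dilatedMean_le ν _ _).trans ih

lemma iteratedMean_clm_comp [CompleteSpace Z] [CompleteSpace W] (L : Z →L[ℝ] W) (a : ℕ → ℝ)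
    (F : E →ᵇ Z) (i : ℕ) :
    iteratedMean ν a (L.compLeftContinuousBounded E F) i
      = L.compLeftContinuousBounded E (iteratedMean ν a F i) := by
  induction i with
  | zero => rfl
  | succ i ih =>
    ext x
    rw [iteratedMean_succ_apply, ih]
    exact L.integral_comp_comm (integrable_boundedContinuous_comp _ (by fun_prop))

lemma dilatedMean_hasFDerivAt {g : E →ᵇ Z} {D : E →ᵇ E →L[ℝ] Z} (hg : ∀ x, HasFDerivAt g (D x) x)
    (r : ℝ) (x : E) : HasFDerivAt (dilatedMean ν r g) (dilatedMean ν r D x) x :=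
  hasFDerivAt_integral_of_dominated_of_fderiv_le (s := univ) (bound := fun _ => ‖D‖)
    (F := fun x ξ => g (x + r • ξ)) (F' := fun x ξ => D (x + r • ξ)) Filter.univ_mem
    (.of_forall fun _ => (integrable_boundedContinuous_comp g (by fun_prop)).1)
    (integrable_boundedContinuous_comp g (by fun_prop))
    (integrable_boundedContinuous_comp D (by fun_prop)).1
    (ae_of_all _ fun _ _ _ => D.norm_coe_le_norm _) (integrable_const _)
    (ae_of_all _ fun ξ y _ => (hasFDerivAt_comp_add_right (r • ξ)).2 (hg _))

lemma iteratedMean_hasFDerivAt {g : E →ᵇ Z} {D : E →ᵇ E →L[ℝ] Z}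
    (hg : ∀ x, HasFDerivAt g (D x) x) (a : ℕ → ℝ) (i : ℕ) (x : E) :
    HasFDerivAt (iteratedMean ν a g i) (iteratedMean ν a D i x) x := by
  induction i generalizing x with
  | zero => exact hg x
  | succ i ih => exact dilatedMean_hasFDerivAt ν ih (a i) x

variable (μ : Measure E) [SFinite μ] [μ.IsAddRightInvariant]

lemma lintegral_prod_translate (κ : Measure E) [SFinite κ] {g : E → ℝ≥0∞} (hg : Measurable g)
    (r : ℝ) : ∫⁻ p, g (p.1 + r • p.2) ∂(μ.prod κ) = κ univ * ∫⁻ x, g x ∂μ := by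
  rw [lintegral_prod_symm' _ (by fun_prop)]
  simp only [lintegral_add_right_eq_self, lintegral_const, mul_comm]

lemma lintegral_enorm_dilatedMean_le {q : ℝ} (hq : 1 ≤ q) (r : ℝ) (F : E →ᵇ Z) :
    ∫⁻ x, ‖dilatedMean ν r F x‖ₑ ^ q ∂μ ≤ ∫⁻ x, ‖F x‖ₑ ^ q ∂μ :=
  calc ∫⁻ x, ‖dilatedMean ν r F x‖ₑ ^ q ∂μ
      ≤ ∫⁻ x, ∫⁻ ξ, ‖F (x + r • ξ)‖ₑ ^ q ∂ν ∂μ := lintegral_mono fun x =>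
        enorm_integral_rpow_le ν (integrable_boundedContinuous_comp F (by fun_prop)).1 hq
    _ = ∫⁻ x, ‖F x‖ₑ ^ q ∂μ := by
        rw [← lintegral_prod (fun p : E × E => ‖F (p.1 + r • p.2)‖ₑ ^ q) (by fun_prop),
          lintegral_prod_translate μ ν (F.continuous.enorm.measurable.pow_const q)]
        simp

lemma lintegral_enorm_iteratedMean_le {q : ℝ} (hq : 1 ≤ q) (a : ℕ → ℝ) (F : E →ᵇ Z) (i : ℕ) :
    ∫⁻ x, ‖iteratedMean ν a F i x‖ₑ ^ q ∂μ ≤ ∫⁻ x, ‖F x‖ₑ ^ q ∂μ := by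
  induction i with
  | zero => exact le_rfl
  | succ i ih => exact (lintegral_enorm_dilatedMean_le ν μ hq _ _).trans ih

end DilatedMean

section Freezing

variable {Ω α β : Type*} {m mΩ : MeasurableSpace Ω} [MeasurableSpace α] [mβ : MeasurableSpace β]
  {P : Measure Ω} [IsFiniteMeasure P] {W : Ω → α} {X : Ω → β}

lemma map_prodMk_restrict_of_indep (hm : m ≤ mΩ) (hW : Measurable[m] W) (hX : Measurable X)
    (hindep : Indep (mβ.comap X) m P) {s : Set Ω} (hs : MeasurableSet[m] s) :
    (P.restrict s).map (fun ω => (W ω, X ω)) = ((P.restrict s).map W).prod (P.map X) := by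
  have hW' : Measurable W := hW.mono hm le_rfl
  refine (Measure.prod_eq fun A B hA hB => ?_).symm
  rw [Measure.map_apply (hW'.prodMk hX) (hA.prod hB), Measure.map_apply hW' hA,
    Measure.map_apply hX hB, Measure.restrict_apply (hW'.prodMk hX (hA.prod hB)),
    Measure.restrict_apply (hW' hA), mul_comm,
    ← (Indep_iff _ _ P).1 hindep _ _ ⟨B, hB, rfl⟩ ((hW hA).inter hs)]
  congr 1
  ext ω
  simp only [mem_inter_iff, mem_preimage, mem_prod]
  tauto

lemma condExp_comp_prodMk_of_indep (hm : m ≤ mΩ) (hW : Measurable[m] W) (hX : Measurable X)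
    (hindep : Indep (mβ.comap X) m P) {Y : Type*} [NormedAddCommGroup Y] [NormedSpace ℝ Y]
    [CompleteSpace Y] {Φ : α × β → Y} (hΦ : StronglyMeasurable Φ)
    (hint : Integrable Φ ((P.map W).prod (P.map X))) :
    P[fun ω => Φ (W ω, X ω) | m] =ᵐ[P] fun ω => ∫ ξ, Φ (W ω, ξ) ∂(P.map X) := by
  have hW' : Measurable W := hW.mono hm le_rfl
  have hWX : Measurable fun ω => (W ω, X ω) := hW'.prodMk hX
  have joint_law := fun s hs => map_prodMk_restrict_of_indep (s := s) hm hW hX hindep hs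
  have hint' : Integrable (fun ω => Φ (W ω, X ω)) P := by
    refine Integrable.comp_measurable ?_ hWX
    rwa [← P.restrict_univ, joint_law univ .univ, P.restrict_univ]
  refine (ae_eq_condExp_of_forall_setIntegral_eq hm hint'
    (fun s _ _ => (hint.integral_prod_left.comp_measurable hW').integrableOn)
    (fun s hs _ => ?_) ?_).symm
  · change ∫ ω in s, (fun w => ∫ ξ, Φ (w, ξ) ∂(P.map X)) (W ω) ∂P = _
    have hint_s : Integrable Φ (((P.restrict s).map W).prod (P.map X)) :=
      hint.mono_measure (Measure.prod_mono (Measure.map_mono Measure.restrict_le_self hW') le_rfl)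
    rw [← integral_map hW'.aemeasurable hΦ.integral_prod_right'.aestronglyMeasurable,
      ← integral_prod Φ hint_s,
      ← joint_law s hs, integral_map hWX.aemeasurable hΦ.aestronglyMeasurable]
  · exact (hΦ.integral_prod_right'.comp_measurable hW).aestronglyMeasurable

end Freezing

section RandomWalk

variable {E : Type*} [MeasurableSpace E]

/-- The laws of the coordinates of the random walk: the starting point has law `lam`, and every
step has law `ν`. -/
def stepLaw (lam ν : Measure E) : ℕ → Measure E
  | 0 => lam
  | _ + 1 => ν

instance (lam ν : Measure E) [IsProbabilityMeasure lam] [IsProbabilityMeasure ν] (i : ℕ) :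
    IsProbabilityMeasure (stepLaw lam ν i) := by
  cases i <;> assumption

/-- The law of the independent starting point and steps of the random walk. -/
def walkMeasure (lam ν : Measure E) [IsProbabilityMeasure lam] [IsProbabilityMeasure ν] :
    Measure (ℕ → E) :=
  Measure.infinitePi (stepLaw lam ν)

instance (lam ν : Measure E) [IsProbabilityMeasure lam] [IsProbabilityMeasure ν] :
    IsProbabilityMeasure (walkMeasure lam ν) :=
  inferInstanceAs (IsProbabilityMeasure (Measure.infinitePi (stepLaw lam ν)))

variable (lam ν : Measure E) [IsProbabilityMeasure lam] [IsProbabilityMeasure ν]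

lemma lintegral_walkMeasure_zero {g : E → ℝ≥0∞} (hg : Measurable g) :
    ∫⁻ ω, g (ω 0) ∂(walkMeasure lam ν) = ∫⁻ x, g x ∂lam := by
  rw [← lintegral_map hg (measurable_pi_apply 0), walkMeasure, Measure.infinitePi_map_eval]
  rfl

lemma map_walkMeasure_step (j : ℕ) : (walkMeasure lam ν).map (fun ω => ω (j + 1)) = ν :=
  Measure.infinitePi_map_eval (stepLaw lam ν) (j + 1)

variable [NormedAddCommGroup E] [BorelSpace E] [SecondCountableTopology E]

/-- The filtration generated by the starting point and the steps of the random walk. -/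
def walkFiltration (E : Type*) [NormedAddCommGroup E] [MeasurableSpace E] [BorelSpace E]
    [SecondCountableTopology E] : Filtration ℕ (MeasurableSpace.pi : MeasurableSpace (ℕ → E)) :=
  Filtration.natural (fun i ω => ω i) fun i => (measurable_pi_apply i).stronglyMeasurable

lemma indep_step_walkFiltration (j : ℕ) :
    Indep (MeasurableSpace.comap (fun ω : ℕ → E => ω (j + 1)) inferInstance) (walkFiltration E j)
      (walkMeasure lam ν) :=
  (iIndepFun_infinitePi (X := fun _ x => x) fun _ => measurable_id).indep_comap_natural_of_lt _
    j.lt_succ_self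

variable [NormedSpace ℝ E]

/-- The position after `j` steps, of sizes `b 0, …, b (j - 1)`, of the walk started at `ω 0`. -/
def walk (b : ℕ → ℝ) : ℕ → (ℕ → E) → E
  | 0, ω => ω 0
  | j + 1, ω => walk b j ω + b j • ω (j + 1)

lemma measurable_walk (b : ℕ → ℝ) (j : ℕ) :
    Measurable[walkFiltration E j] (walk (E := E) b j) := by
  have coordinate : ∀ i, Measurable[walkFiltration E i] fun ω : ℕ → E => ω i := fun i =>
    (Filtration.stronglyAdapted_natural (u := fun i (ω : ℕ → E) => ω i)
      (fun i => (measurable_pi_apply i).stronglyMeasurable) i).measurable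
  induction j with
  | zero => exact coordinate 0
  | succ j ih =>
    exact (ih.mono ((walkFiltration E).mono j.le_succ) le_rfl).add
      ((coordinate (j + 1)).const_smul (b j))

lemma map_walk_prodMk_step (b : ℕ → ℝ) (j : ℕ) :
    (walkMeasure lam ν).map (fun ω => (walk b j ω, ω (j + 1)))
      = ((walkMeasure lam ν).map (walk b j)).prod ν := by
  simpa only [Measure.restrict_univ, map_walkMeasure_step] using
    map_prodMk_restrict_of_indep ((walkFiltration E).le j) (measurable_walk b j)
      (measurable_pi_apply (j + 1)) (indep_step_walkFiltration lam ν j) .univ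

lemma lintegral_walk_step (b : ℕ → ℝ) (j : ℕ) {G : E × E → ℝ≥0∞} (hG : Measurable G) :
    ∫⁻ ω, G (walk b j ω, ω (j + 1)) ∂(walkMeasure lam ν)
      = ∫⁻ ω, ∫⁻ ξ, G (walk b j ω, ξ) ∂ν ∂(walkMeasure lam ν) := by
  have hwalk : Measurable (walk (E := E) b j) :=
    (measurable_walk b j).mono ((walkFiltration E).le j) le_rfl
  rw [← lintegral_map (f := G) (g := fun ω => (walk b j ω, ω (j + 1))) hG (by fun_prop),
    map_walk_prodMk_step, lintegral_prod _ hG.aemeasurable,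
    lintegral_map hG.lintegral_prod_right' hwalk]

/-- The witness `h` is independent of the initial law; this is what allows the passage from
probability measures to the infinite measure `μ`. -/
lemma exists_lintegral_walk_eq (μ : Measure E) [SFinite μ] [μ.IsAddRightInvariant] (b : ℕ → ℝ)
    (j : ℕ) {g : E → ℝ≥0∞} (hg : Measurable g) :
    ∃ h : E → ℝ≥0∞, Measurable h ∧ ∫⁻ x, h x ∂μ = ∫⁻ x, g x ∂μ ∧
      ∀ (lam : Measure E) [IsProbabilityMeasure lam],
        ∫⁻ ω, g (walk b j ω) ∂(walkMeasure lam ν) = ∫⁻ x, h x ∂lam := by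
  induction j generalizing g with
  | zero => exact ⟨g, hg, rfl, fun lam _ => lintegral_walkMeasure_zero lam ν hg⟩
  | succ j ih =>
    have hg' : Measurable fun p : E × E => g (p.1 + b j • p.2) := by fun_prop
    obtain ⟨h, h_meas, h_integral, h_walk⟩ := ih (hg'.lintegral_prod_right' (ν := ν))
    refine ⟨h, h_meas, ?_, fun lam _ => ?_⟩
    · rw [h_integral, ← lintegral_prod _ hg'.aemeasurable, lintegral_prod_translate μ ν hg]
      simp
    · exact (lintegral_walk_step lam ν b j hg').trans (h_walk lam)

lemma martingale_comp_walk {Y : Type*} [NormedAddCommGroup Y] [NormedSpace ℝ Y] [CompleteSpace Y]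
    {b : ℕ → ℝ} {h : ℕ → E →ᵇ Y} (hh : ∀ j, h j = dilatedMean ν (b j) (h (j + 1))) :
    Martingale (fun j ω => h j (walk b j ω)) (walkFiltration E) (walkMeasure lam ν) := by
  have hwalk : ∀ j, Measurable (walk (E := E) b j) := fun j =>
    (measurable_walk b j).mono ((walkFiltration E).le j) le_rfl
  refine martingale_nat
    (fun j => (h j).continuous.stronglyMeasurable.comp_measurable (measurable_walk b j))
    (fun j => integrable_boundedContinuous_comp (h j) (hwalk j)) fun j => ?_
  have : IsProbabilityMeasure ((walkMeasure lam ν).map (walk b j)) :=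
    Measure.isProbabilityMeasure_map (hwalk j).aemeasurable
  have freezing := condExp_comp_prodMk_of_indep ((walkFiltration E).le j) (measurable_walk b j)
    (measurable_pi_apply (j + 1)) (indep_step_walkFiltration lam ν j)
    (Φ := fun p => h (j + 1) (p.1 + b j • p.2))
    ((h (j + 1)).continuous.stronglyMeasurable.comp_measurable (by fun_prop))
    (integrable_boundedContinuous_comp _ (by fun_prop))
  filter_upwards [freezing] with ω hω
  rw [map_walkMeasure_step] at hω
  exact (congrArg (· (walk b j ω)) (hh j)).trans hω.symm

end RandomWalk

lemma setLIntegral_eq_mul_lintegral_cond {α : Type*} [MeasurableSpace α] {μ : Measure α}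
    {S : Set α} (hS0 : μ S ≠ 0) (hS : μ S ≠ ∞) (g : α → ℝ≥0∞) :
    ∫⁻ x in S, g x ∂μ = μ S * ∫⁻ x, g x ∂(μ[|S]) := by
  rw [ProbabilityTheory.cond, lintegral_smul_measure, smul_eq_mul, ← mul_assoc,
    ENNReal.mul_inv_cancel hS0 hS, one_mul]

lemma measurable_enorm_sub_rpow {α : Type*} [TopologicalSpace α] [MeasurableSpace α]
    [OpensMeasurableSpace α] {Z : Type*} [NormedAddCommGroup Z] {F G : α → Z}
    (hF : Continuous F) (hG : Continuous G) (q : ℝ) : Measurable fun a => ‖F a - G a‖ₑ ^ q :=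
  (hF.sub hG).enorm.measurable.pow_const q

section MeanIncrement

variable {E : Type*} [NormedAddCommGroup E] [NormedSpace ℝ E] [MeasurableSpace E] [BorelSpace E]
  [SecondCountableTopology E]
variable {Y : Type*} [NormedAddCommGroup Y] [NormedSpace ℝ Y]

lemma measurable_increment {Z : Type*} [NormedAddCommGroup Z] (G H : E →ᵇ Z) (q r : ℝ) :
    Measurable fun p : E × E => ‖G (p.1 + r • p.2) - H p.1‖ₑ ^ q :=
  measurable_enorm_sub_rpow (by fun_prop) (by fun_prop) q

/-- The `q`-th power of the `L_q` norm of the `i`-th martingale difference of the iterated means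
of `F`, when the walk starts from the (infinite) measure `μ`. -/
def meanIncrement (μ ν : Measure E) [IsProbabilityMeasure ν] (q : ℝ) (a : ℕ → ℝ) (F : E →ᵇ Y)
    (i : ℕ) : ℝ≥0∞ :=
  ∫⁻ p, ‖iteratedMean ν a F i (p.1 + a i • p.2) - iteratedMean ν a F (i + 1) p.1‖ₑ ^ q ∂(μ.prod ν)

end MeanIncrement

section Cotype

variable {E : Type} [NormedAddCommGroup E] [NormedSpace ℝ E] [MeasurableSpace E] [BorelSpace E]
  [SecondCountableTopology E] (ν : Measure E) [IsProbabilityMeasure ν]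
variable {Y : Type*} [NormedAddCommGroup Y] [NormedSpace ℝ Y] [CompleteSpace Y]
variable {q m : ℝ} {b : ℕ → ℝ} {h : ℕ → E →ᵇ Y}

lemma sum_lintegral_walk_increment_le (hm : MartCotypeBound q Y m)
    (hh : ∀ j, h j = dilatedMean ν (b j) (h (j + 1))) (lam : Measure E) [IsProbabilityMeasure lam]
    {B : ℝ≥0∞} (hB : ∀ j, ∫⁻ ω, ‖h j (walk b j ω)‖ₑ ^ q ∂(walkMeasure lam ν) ≤ B) (J : ℕ) :
    ∑ j ∈ Finset.range J, ∫⁻ ω,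
        (∫⁻ ξ, ‖h (j + 1) (walk b j ω + b j • ξ) - h j (walk b j ω)‖ₑ ^ q ∂ν) ∂(walkMeasure lam ν)
      ≤ ENNReal.ofReal m ^ q * B := by
  have cotype := hm (ℕ → E) (walkMeasure lam ν) _ _ (martingale_comp_walk lam ν hh) B hB
  refine le_trans (Finset.sum_le_sum fun j _ => ?_) ((ENNReal.sum_le_tsum _).trans cotype)
  exact (lintegral_walk_step lam ν b j (measurable_increment (h (j + 1)) (h j) q (b j))).ge

variable (μ : Measure E) [SigmaFinite μ] [μ.IsAddRightInvariant]

lemma sum_lintegral_increment_le (hm : MartCotypeBound q Y m)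
    (hh : ∀ j, h j = dilatedMean ν (b j) (h (j + 1))) {V : ℝ≥0∞}
    (hV : ∀ j, ∫⁻ x, ‖h j x‖ₑ ^ q ∂μ ≤ V) (J : ℕ) :
    ∑ j ∈ Finset.range J, ∫⁻ p, ‖h (j + 1) (p.1 + b j • p.2) - h j p.1‖ₑ ^ q ∂(μ.prod ν)
      ≤ ENNReal.ofReal m ^ q * V := by
  have increment_meas := fun j => measurable_increment (h (j + 1)) (h j) q (b j)
  choose D D_meas D_integral D_walk using fun j =>
    exists_lintegral_walk_eq ν μ b j ((increment_meas j).lintegral_prod_right' (ν := ν))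
  choose K _ K_integral K_walk using fun j =>
    exists_lintegral_walk_eq ν μ b j ((h j).continuous.enorm.measurable.pow_const q)
  have finite_measure_bound : ∀ S : Set E, MeasurableSet S → μ S ≠ ∞ →
      ∫⁻ x in S, ∑ j ∈ Finset.range J, D j x ∂μ ≤ ENNReal.ofReal m ^ q * V := by
    intro S _ hS
    rcases eq_or_ne (μ S) 0 with hS0 | hS0
    · simp [Measure.restrict_eq_zero.2 hS0]
    have := cond_isProbabilityMeasure_of_finite hS0 hS
    have norm_bound : ∀ j, ∫⁻ ω, ‖h j (walk b j ω)‖ₑ ^ q ∂(walkMeasure (μ[|S]) ν)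
        ≤ (μ S)⁻¹ * V := fun j => by
      rw [K_walk j, ProbabilityTheory.cond, lintegral_smul_measure]
      exact mul_le_mul_right
        ((setLIntegral_le_lintegral S _).trans ((K_integral j).trans_le (hV j))) _
    have cotype := sum_lintegral_walk_increment_le ν hm hh (μ[|S]) norm_bound J
    simp only [D_walk] at cotype
    calc ∫⁻ x in S, ∑ j ∈ Finset.range J, D j x ∂μ
        = μ S * ∑ j ∈ Finset.range J, ∫⁻ x, D j x ∂(μ[|S]) := by
          rw [setLIntegral_eq_mul_lintegral_cond hS0 hS, lintegral_finsetSum _ fun j _ => D_meas j]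
      _ ≤ μ S * (ENNReal.ofReal m ^ q * ((μ S)⁻¹ * V)) := by gcongr
      _ = (μ S * (μ S)⁻¹) * (ENNReal.ofReal m ^ q * V) := by ring
      _ = ENNReal.ofReal m ^ q * V := by rw [ENNReal.mul_inv_cancel hS0 hS, one_mul]
  calc ∑ j ∈ Finset.range J, ∫⁻ p, ‖h (j + 1) (p.1 + b j • p.2) - h j p.1‖ₑ ^ q ∂(μ.prod ν)
      = ∫⁻ x, ∑ j ∈ Finset.range J, D j x ∂μ := by
        rw [lintegral_finsetSum _ fun j _ => D_meas j]
        exact Finset.sum_congr rfl fun j _ => by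
          rw [lintegral_prod _ (increment_meas j).aemeasurable, D_integral]
    _ ≤ ENNReal.ofReal m ^ q * V := lintegral_le_of_forall_fin_meas_le _ finite_measure_bound

/-- The martingale runs the averaging backwards: it starts from the iterated mean of order `J`
and ends at `F`, after which it stays constant. -/
theorem sum_meanIncrement_le (hm : MartCotypeBound q Y m) (hq : 1 ≤ q) (a : ℕ → ℝ) (F : E →ᵇ Y)
    (J : ℕ) :
    ∑ i ∈ Finset.range J, meanIncrement μ ν q a F i
      ≤ ENNReal.ofReal m ^ q * ∫⁻ x, ‖F x‖ₑ ^ q ∂μ := by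
  let b : ℕ → ℝ := fun j => if j < J then a (J - 1 - j) else 0
  have backward : ∀ j, iteratedMean ν a F (J - j)
      = dilatedMean ν (b j) (iteratedMean ν a F (J - (j + 1))) := by
    intro j
    by_cases hj : j < J
    · obtain ⟨k, rfl⟩ := Nat.exists_eq_add_of_lt hj
      have order_eq : j + k + 1 - j = k + 1 := by omega
      have next_order_eq : j + k + 1 - (j + 1) = k := by omega
      have step_eq : j + k + 1 - 1 - j = k := by omega
      simp only [b, hj, if_true, order_eq, next_order_eq, step_eq]
      rfl
    · have order_eq : J - j = 0 := by omega
      have next_order_eq : J - (j + 1) = 0 := by omega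
      simp only [b, hj, if_false, order_eq, next_order_eq, dilatedMean_zero]
  have increments := sum_lintegral_increment_le ν μ hm backward
    (fun j => lintegral_enorm_iteratedMean_le ν μ hq a F (J - j)) J
  refine le_of_eq_of_le ?_ increments
  rw [← Finset.sum_range_reflect]
  refine Finset.sum_congr rfl fun j hj => ?_
  have hj : j < J := Finset.mem_range.1 hj
  have next_order_eq : J - (j + 1) = J - 1 - j := by omega
  have order_eq : J - j = J - 1 - j + 1 := by omega
  simp only [meanIncrement, b, hj, if_true, next_order_eq, order_eq]

end Cotype

section Shift

variable {E : Type*} [NormedAddCommGroup E] [NormedSpace ℝ E] [MeasurableSpace E] [BorelSpace E]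
  [FiniteDimensional ℝ E] (μ : Measure E) [μ.IsAddHaarMeasure]
variable {Z : Type*} [NormedAddCommGroup Z]

/-- The uniform distribution on the unit ball. -/
abbrev unitBallLaw {E : Type*} [NormedAddCommGroup E] [MeasurableSpace E] (μ : Measure E) :
    Measure E :=
  μ[|closedBall 0 1]

instance : IsProbabilityMeasure (unitBallLaw μ) :=
  cond_isProbabilityMeasure_of_finite (measure_closedBall_pos μ 0 one_pos).ne'
    measure_closedBall_lt_top.ne

lemma ae_unitBallLaw_norm_le_one {E : Type*} [NormedAddCommGroup E] [MeasurableSpace E]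
    [OpensMeasurableSpace E] (μ : Measure E) : ∀ᵐ ξ ∂(unitBallLaw μ), ‖ξ‖ ≤ 1 := by
  filter_upwards [ae_cond_mem measurableSet_closedBall] with ξ hξ
  exact mem_closedBall_zero_iff.1 hξ

lemma setLIntegral_cond_comp_add_le {E : Type*} [AddCommGroup E] [MeasurableSpace E]
    [MeasurableAdd E] (μ : Measure E) [μ.IsAddRightInvariant] (A : Set E) (w : E) (ψ : E → ℝ≥0∞) :
    ∫⁻ ξ in (· + w) ⁻¹' A, ψ (ξ + w) ∂(μ[|A]) ≤ ∫⁻ ξ, ψ ξ ∂(μ[|A]) := by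
  simp only [ProbabilityTheory.cond, Measure.restrict_smul, lintegral_smul_measure, smul_eq_mul]
  refine mul_le_mul_right ?_ _
  calc ∫⁻ ξ in (· + w) ⁻¹' A, ψ (ξ + w) ∂(μ.restrict A)
      ≤ ∫⁻ ξ in (· + w) ⁻¹' A, ψ (ξ + w) ∂μ :=
        lintegral_mono' (Measure.restrict_mono le_rfl Measure.restrict_le_self) le_rfl
    _ = ∫⁻ ξ in A, ψ ξ ∂μ := (measurePreserving_add_right μ w).setLIntegral_comp_preimage_emb
        (measurableEmbedding_addRight w) ψ A

lemma half_le_unitBallLaw_preimage_add {w : E} (hw : ‖w‖ ≤ 1)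
    (hdim : Module.finrank ℝ E * ‖w‖ ≤ 1) :
    1 / 2 ≤ unitBallLaw μ ((· + w) ⁻¹' closedBall 0 1) := by
  set d := Module.finrank ℝ E
  have hball : μ (closedBall (0 : E) 1) ≠ 0 := (measure_closedBall_pos μ 0 one_pos).ne'
  have ball_subset : closedBall (-(2⁻¹ : ℝ) • w) (1 - ‖w‖ / 2)
      ⊆ closedBall 0 1 ∩ (· + w) ⁻¹' closedBall 0 1 := by
    intro ξ hξ
    have half_norm : ‖(2⁻¹ : ℝ) • w‖ = ‖w‖ / 2 := by rw [norm_smul]; norm_num; ring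
    have hξ : ‖ξ + (2⁻¹ : ℝ) • w‖ ≤ 1 - ‖w‖ / 2 := by
      simpa [dist_eq_norm] using hξ
    have left : ‖ξ‖ ≤ ‖ξ + (2⁻¹ : ℝ) • w‖ + ‖(2⁻¹ : ℝ) • w‖ := by
      simpa using norm_sub_le (ξ + (2⁻¹ : ℝ) • w) ((2⁻¹ : ℝ) • w)
    have right : ‖ξ + w‖ ≤ ‖ξ + (2⁻¹ : ℝ) • w‖ + ‖(2⁻¹ : ℝ) • w‖ := by
      have halves : ξ + w = ξ + (2⁻¹ : ℝ) • w + (2⁻¹ : ℝ) • w := by module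
      exact halves ▸ norm_add_le _ _
    simp only [mem_inter_iff, mem_closedBall_zero_iff, mem_preimage]
    constructor <;> linarith
  have bernoulli : 1 / 2 ≤ (1 - ‖w‖ / 2) ^ d := by
    have := one_add_mul_le_pow (show -2 ≤ -(‖w‖ / 2) by linarith) d
    rw [sub_eq_add_neg]
    linarith
  rw [unitBallLaw, cond_apply measurableSet_closedBall]
  calc (1 / 2 : ℝ≥0∞) = ENNReal.ofReal (1 / 2) := by simp
    _ ≤ ENNReal.ofReal ((1 - ‖w‖ / 2) ^ d) := ENNReal.ofReal_le_ofReal bernoulli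
    _ = (μ (closedBall 0 1))⁻¹ * μ (closedBall (-(2⁻¹ : ℝ) • w) (1 - ‖w‖ / 2)) := by
        rw [Measure.addHaar_closedBall' μ (-(2⁻¹ : ℝ) • w) (r := 1 - ‖w‖ / 2) (by linarith),
          mul_comm, mul_assoc, ENNReal.mul_inv_cancel hball measure_closedBall_lt_top.ne, mul_one]
    _ ≤ _ := by gcongr

/-- The `q`-th power of the `L_q(μ)` distance between `F` and its translate by `u`. -/
def shiftDeviation (q : ℝ) (F : E → Z) (u : E) : ℝ≥0∞ :=
  ∫⁻ x, ‖F (x + u) - F x‖ₑ ^ q ∂μ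

variable {G K : E → Z} {q : ℝ}

lemma shiftDeviation_le_shiftDeviation_add (hG : Continuous G) (hK : Continuous K) (hq : 1 ≤ q)
    (c : ℝ) (u : E) :
    shiftDeviation μ q G u
      ≤ 2 ^ q * (∫⁻ p, ‖G (p.1 + c • p.2) - K p.1‖ₑ ^ q ∂(μ.prod (unitBallLaw μ))
        + 2 ^ q * (shiftDeviation μ q K u
          + ∫⁻ p, ‖G (p.1 + c • p.2) - K p.1‖ₑ ^ q ∂(μ.prod (unitBallLaw μ)))) := by
  set ψ : E → ℝ≥0∞ := fun ξ => ∫⁻ x, ‖G (x + c • ξ) - K x‖ₑ ^ q ∂μ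
  have hψ : Measurable ψ := (measurable_enorm_sub_rpow (α := E × E) (by fun_prop) (by fun_prop) q :
    Measurable fun p : E × E => ‖G (p.1 + c • p.2) - K p.1‖ₑ ^ q).lintegral_prod_left'
  have pointwise : ∀ ξ, shiftDeviation μ q G u
      ≤ 2 ^ q * (ψ ξ + 2 ^ q * (shiftDeviation μ q K u + ψ ξ)) := fun ξ =>
    calc shiftDeviation μ q G u = ∫⁻ x, ‖G (x + u + c • ξ) - G (x + c • ξ)‖ₑ ^ q ∂μ := by
          rw [shiftDeviation, ← lintegral_add_right_eq_self _ (c • ξ)]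
          simp only [add_right_comm]
      _ ≤ 2 ^ q * (∫⁻ x, ‖G (x + u + c • ξ) - K (x + u)‖ₑ ^ q ∂μ
            + ∫⁻ x, ‖K (x + u) - G (x + c • ξ)‖ₑ ^ q ∂μ) :=
          lintegral_enorm_sub_rpow_le _ _ hq
            (measurable_enorm_sub_rpow (by fun_prop) (by fun_prop) q).aemeasurable
      _ ≤ 2 ^ q * (ψ ξ + 2 ^ q * (shiftDeviation μ q K u + ψ ξ)) := by
          rw [lintegral_add_right_eq_self (fun x => ‖G (x + c • ξ) - K x‖ₑ ^ q)]
          simp only [ψ, enorm_sub_rev (G _) (K _)]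
          gcongr
          exact lintegral_enorm_sub_rpow_le _ _ hq
            (measurable_enorm_sub_rpow (by fun_prop) (by fun_prop) q).aemeasurable
  rw [lintegral_prod_symm' _ (measurable_enorm_sub_rpow (by fun_prop) (by fun_prop) q)]
  calc shiftDeviation μ q G u = ∫⁻ _, shiftDeviation μ q G u ∂(unitBallLaw μ) := by simp
    _ ≤ ∫⁻ ξ, 2 ^ q * (ψ ξ + 2 ^ q * (shiftDeviation μ q K u + ψ ξ)) ∂(unitBallLaw μ) :=
        lintegral_mono pointwise
    _ = _ := by
        rw [lintegral_const_mul _ (by fun_prop), lintegral_add_left hψ,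
          lintegral_const_mul _ (by fun_prop), lintegral_add_right _ hψ]
        simp [ψ]

lemma shiftDeviation_smul_le (hG : Continuous G) (hK : Continuous K) (hq : 1 ≤ q) (c : ℝ) {w : E}
    (hw : ‖w‖ ≤ 1) (hdim : Module.finrank ℝ E * ‖w‖ ≤ 1) :
    shiftDeviation μ q G (c • w)
      ≤ 4 * 2 ^ q * ∫⁻ p, ‖G (p.1 + c • p.2) - K p.1‖ₑ ^ q ∂(μ.prod (unitBallLaw μ)) := by
  set ψ : E → ℝ≥0∞ := fun ξ => ∫⁻ x, ‖G (x + c • ξ) - K x‖ₑ ^ q ∂μ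
  have hψ : Measurable ψ := (measurable_enorm_sub_rpow (α := E × E) (by fun_prop) (by fun_prop) q :
    Measurable fun p : E × E => ‖G (p.1 + c • p.2) - K p.1‖ₑ ^ q).lintegral_prod_left'
  have pointwise : ∀ ξ, shiftDeviation μ q G (c • w) ≤ 2 ^ q * (ψ (ξ + w) + ψ ξ) := fun ξ =>
    calc shiftDeviation μ q G (c • w)
        = ∫⁻ x, ‖G (x + c • (ξ + w)) - G (x + c • ξ)‖ₑ ^ q ∂μ := by
          rw [shiftDeviation, ← lintegral_add_right_eq_self _ (c • ξ)]
          simp only [smul_add, add_assoc]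
      _ ≤ 2 ^ q * (ψ (ξ + w) + ∫⁻ x, ‖K x - G (x + c • ξ)‖ₑ ^ q ∂μ) :=
          lintegral_enorm_sub_rpow_le _ _ hq
            (measurable_enorm_sub_rpow (by fun_prop) (by fun_prop) q).aemeasurable
      _ = 2 ^ q * (ψ (ξ + w) + ψ ξ) := by simp only [ψ, enorm_sub_rev (K _)]
  rw [lintegral_prod_symm' _ (measurable_enorm_sub_rpow (by fun_prop) (by fun_prop) q)]
  have overlap : 1 / 2 * shiftDeviation μ q G (c • w)
      ≤ 2 ^ q * (∫⁻ ξ, ψ ξ ∂(unitBallLaw μ) + ∫⁻ ξ, ψ ξ ∂(unitBallLaw μ)) :=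
    calc 1 / 2 * shiftDeviation μ q G (c • w)
        ≤ ∫⁻ _ in (· + w) ⁻¹' closedBall 0 1, shiftDeviation μ q G (c • w) ∂(unitBallLaw μ) := by
          rw [setLIntegral_const, mul_comm]
          gcongr
          exact half_le_unitBallLaw_preimage_add μ hw hdim
      _ ≤ ∫⁻ ξ in (· + w) ⁻¹' closedBall 0 1, 2 ^ q * (ψ (ξ + w) + ψ ξ) ∂(unitBallLaw μ) :=
          lintegral_mono pointwise
      _ ≤ _ := by
          rw [lintegral_const_mul _ (by fun_prop), lintegral_add_right _ hψ]
          exact mul_le_mul_right (add_le_add (setLIntegral_cond_comp_add_le μ _ w ψ)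
            (setLIntegral_le_lintegral _ _)) _
  calc shiftDeviation μ q G (c • w) = 2 * (1 / 2 * shiftDeviation μ q G (c • w)) := by
        rw [← mul_assoc, one_div, ENNReal.mul_inv_cancel (by norm_num) (by norm_num), one_mul]
    _ ≤ 2 * (2 ^ q * (∫⁻ ξ, ψ ξ ∂(unitBallLaw μ) + ∫⁻ ξ, ψ ξ ∂(unitBallLaw μ))) := by gcongr
    _ = _ := by ring

variable [NormedSpace ℝ Z]

lemma four_le_two_rpow (hq : 2 ≤ q) : (4 : ℝ≥0∞) ≤ 2 ^ q :=
  calc (4 : ℝ≥0∞) = 2 ^ (2 : ℝ) := by norm_num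
    _ ≤ 2 ^ q := ENNReal.rpow_le_rpow_of_exponent_le (by norm_num) hq

lemma shiftDeviation_iteratedMean_le (hq : 2 ≤ q) {a : ℕ → ℝ} (ha : ∀ i, 0 < a i)
    (ha_mono : ∀ i, a i ≤ a (i + 1)) (ha_dim : ∀ i, Module.finrank ℝ E * a i ≤ a (i + 1))
    (F : E →ᵇ Z) {i : ℕ} {u : E} (hu : ‖u‖ ≤ a i) :
    shiftDeviation μ q (iteratedMean (unitBallLaw μ) a F i) u
      ≤ (2 ^ q) ^ 4 * (meanIncrement μ (unitBallLaw μ) q a F i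
        + meanIncrement μ (unitBallLaw μ) q a F (i + 1)) := by
  set A : ℝ≥0∞ := 2 ^ q
  set d := meanIncrement μ (unitBallLaw μ) q a F
  set S := fun i => shiftDeviation μ q (iteratedMean (unitBallLaw μ) a F i) u
  have to_next : S i ≤ A * (d i + A * (S (i + 1) + d i)) :=
    shiftDeviation_le_shiftDeviation_add μ (by fun_prop) (by fun_prop) (by linarith) (a i) u
  have next_small : S (i + 1) ≤ 4 * A * d (i + 1) := by
    have hu_scaled : u = a (i + 1) • (a (i + 1))⁻¹ • u := (smul_inv_smul₀ (ha _).ne' u).symm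
    have norm_scaled : ‖(a (i + 1))⁻¹ • u‖ = ‖u‖ / a (i + 1) := by
      rw [norm_smul, norm_inv, Real.norm_of_nonneg (ha _).le, inv_mul_eq_div]
    simp only [S]
    rw [hu_scaled]
    refine shiftDeviation_smul_le μ (by fun_prop) (by fun_prop) (by linarith) (a (i + 1)) ?_ ?_
    · rw [norm_scaled, div_le_one (ha _)]
      exact hu.trans (ha_mono i)
    · rw [norm_scaled, ← mul_div_assoc, div_le_one (ha _)]
      exact (mul_le_mul_of_nonneg_left hu (Nat.cast_nonneg _)).trans (ha_dim i)
  have hA : 4 ≤ A := four_le_two_rpow hq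
  have hA1 : 1 ≤ A := le_trans (by norm_num) hA
  calc S i ≤ A * (d i + A * (4 * A * d (i + 1) + d i)) := to_next.trans (by gcongr)
    _ = A * (1 + A) * d i + A ^ 3 * 4 * d (i + 1) := by ring
    _ ≤ A * (A + A) * d i + A ^ 3 * A * d (i + 1) := by gcongr
    _ ≤ A ^ 4 * d i + A ^ 4 * d (i + 1) := by
        have : A * (A + A) ≤ A ^ 4 :=
          calc A * (A + A) = 2 * A ^ 2 := by ring
            _ ≤ A ^ 2 * A ^ 2 := by
              gcongr
              exact le_trans (by norm_num) (hA.trans (le_self_pow hA1 two_ne_zero))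
            _ = A ^ 4 := by ring
        gcongr
        rw [pow_succ A 3]
    _ = A ^ 4 * (d i + d (i + 1)) := by ring

end Shift

section ConsecutiveIncrements

variable {E : Type} [NormedAddCommGroup E] [NormedSpace ℝ E] [MeasurableSpace E] [BorelSpace E]
  [FiniteDimensional ℝ E] (μ : Measure E) [μ.IsAddHaarMeasure]
variable {Y : Type*} [NormedAddCommGroup Y] [NormedSpace ℝ Y] [CompleteSpace Y]

lemma sum_consecutive_meanIncrement_le {q m : ℝ} (hq : 1 ≤ q) (hm : MartCotypeBound q Y m)
    (a : ℕ → ℝ) (F : E →ᵇ Y) (J : ℕ) :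
    ∑ i ∈ Finset.range J, (meanIncrement μ (unitBallLaw μ) q a F i
        + meanIncrement μ (unitBallLaw μ) q a F (i + 1))
      ≤ 2 * (ENNReal.ofReal m ^ q * ∫⁻ x, ‖F x‖ₑ ^ q ∂μ) := by
  have total := sum_meanIncrement_le (unitBallLaw μ) μ hm hq a F (J + 1)
  rw [Finset.sum_add_distrib, two_mul]
  gcongr
  · rw [Finset.sum_range_succ] at total
    exact le_self_add.trans total
  · rw [Finset.sum_range_succ'] at total
    exact le_self_add.trans total

end ConsecutiveIncrements

section DifferenceQuotient

variable {E : Type*} [NormedAddCommGroup E] [NormedSpace ℝ E]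
variable {Z : Type*} [NormedAddCommGroup Z] [NormedSpace ℝ Z]

/-- The error made when the difference quotient of `G` at `x` with increment `r • ξ` is replaced
by the derivative `D x ξ`. -/
def quotientError (G : E → Z) (D : E → E →L[ℝ] Z) (r : ℝ) (x ξ : E) : Z :=
  r⁻¹ • (G (x + r • ξ) - G x) - D x ξ

lemma smul_quotientError (G : E → Z) (D : E → E →L[ℝ] Z) {r : ℝ} (hr : r ≠ 0) (x ξ : E) :
    r • quotientError G D r x ξ = G (x + r • ξ) - G x - D x (r • ξ) := by
  rw [quotientError, smul_sub, smul_inv_smul₀ hr, map_smul]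

variable {G : E → Z} {D : E → E →L[ℝ] Z}

lemma continuous_quotientError (hG : Continuous G) (hD : Continuous D) (r : ℝ) :
    Continuous fun p : E × E => quotientError G D r p.1 p.2 := by
  unfold quotientError
  fun_prop

lemma quotientError_eq_integral [CompleteSpace Z] (hG : ∀ x, HasFDerivAt G (D x) x)
    (hD : Continuous D) {r : ℝ} (hr : r ≠ 0) (x ξ : E) :
    quotientError G D r x ξ = ∫ θ in Ioc (0 : ℝ) 1, (D (x + θ • r • ξ) ξ - D x ξ) := by
  have along_segment : ∀ θ : ℝ,
      HasDerivAt (fun θ : ℝ => r⁻¹ • G (x + θ • r • ξ) - θ • D x ξ)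
        (D (x + θ • r • ξ) ξ - D x ξ) θ := by
    intro θ
    have segment : HasDerivAt (fun θ : ℝ => x + θ • r • ξ) (r • ξ) θ := by
      simpa using ((hasDerivAt_id θ).smul_const (r • ξ)).const_add x
    have composed := ((hG (x + θ • r • ξ)).comp_hasDerivAt θ segment).const_smul r⁻¹
    rw [map_smul, inv_smul_smul₀ hr] at composed
    simpa only [one_smul] using! composed.sub ((hasDerivAt_id θ).smul_const (D x ξ))
  rw [← intervalIntegral.integral_of_le zero_le_one,
    intervalIntegral.integral_eq_sub_of_hasDerivAt (fun θ _ => along_segment θ)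
      (Continuous.intervalIntegrable (by fun_prop) _ _)]
  simp only [quotientError, one_smul, zero_smul, add_zero, sub_zero, smul_sub]
  abel

lemma lintegral_enorm_quotientError_le [CompleteSpace Z] [MeasurableSpace E] [BorelSpace E]
    [SecondCountableTopology E] (μ : Measure E) [SFinite μ] {q : ℝ} (hq : 1 ≤ q)
    (hG : ∀ x, HasFDerivAt G (D x) x) (hD : Continuous D) {r : ℝ} (hr : r ≠ 0) {ξ : E} {B : ℝ≥0∞}
    (hB : ∀ θ ∈ Ioc (0 : ℝ) 1, shiftDeviation μ q (fun x => D x ξ) (θ • r • ξ) ≤ B) :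
    ∫⁻ x, ‖quotientError G D r x ξ‖ₑ ^ q ∂μ ≤ B := by
  have : IsProbabilityMeasure (volume.restrict (Ioc (0 : ℝ) 1)) := ⟨by simp⟩
  calc ∫⁻ x, ‖quotientError G D r x ξ‖ₑ ^ q ∂μ
      ≤ ∫⁻ x, (∫⁻ θ in Ioc (0 : ℝ) 1, ‖D (x + θ • r • ξ) ξ - D x ξ‖ₑ ^ q) ∂μ :=
        lintegral_mono fun x => by
          rw [quotientError_eq_integral hG hD hr]
          exact enorm_integral_rpow_le _ (by fun_prop : Continuous _).aestronglyMeasurable hq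
    _ = ∫⁻ θ in Ioc (0 : ℝ) 1, shiftDeviation μ q (fun x => D x ξ) (θ • r • ξ) :=
        lintegral_lintegral_swap
          (measurable_enorm_sub_rpow (α := E × ℝ) (by fun_prop) (by fun_prop) q).aemeasurable
    _ ≤ ∫⁻ _ in Ioc (0 : ℝ) 1, B := setLIntegral_mono' measurableSet_Ioc hB
    _ = B := by simp

end DifferenceQuotient

section UnitBallMeans

variable {E : Type*} [NormedAddCommGroup E] [NormedSpace ℝ E] [MeasurableSpace E] [BorelSpace E]
  [FiniteDimensional ℝ E] (μ : Measure E) [μ.IsAddHaarMeasure]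
variable {Z : Type*} [NormedAddCommGroup Z] [NormedSpace ℝ Z]

lemma integral_clm_unitBallLaw (L : E →L[ℝ] Z) : ∫ ξ, L ξ ∂(unitBallLaw μ) = 0 := by
  have neg_invariant : ∫ ξ in closedBall 0 1, L (-ξ) ∂μ = ∫ ξ in closedBall 0 1, L ξ ∂μ := by
    have := (Measure.measurePreserving_neg μ).setIntegral_preimage_emb
      (MeasurableEquiv.neg E).measurableEmbedding L (closedBall 0 1)
    simpa using this
  have antisymmetric : -∫ ξ in closedBall 0 1, L ξ ∂μ = ∫ ξ in closedBall 0 1, L ξ ∂μ := by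
    simpa only [map_neg, integral_neg] using neg_invariant
  have : IsAddTorsionFree Z := .of_isTorsionFree ℝ Z
  rw [unitBallLaw, ProbabilityTheory.cond, integral_smul_measure, self_eq_neg.1 antisymmetric.symm,
    smul_zero]

variable [CompleteSpace Z] (g : E →ᵇ Z) (D : E → E →L[ℝ] Z)

lemma dilatedMean_sub_eq_smul_integral_quotientError {r : ℝ} (hr : r ≠ 0) (x : E) :
    dilatedMean (unitBallLaw μ) r g x - g x
      = r • ∫ ξ, quotientError g D r x ξ ∂(unitBallLaw μ) := by
  have hg : Integrable (fun ξ => g (x + r • ξ)) (unitBallLaw μ) :=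
    integrable_boundedContinuous_comp g (by fun_prop)
  have h_diff : Integrable (fun ξ => g (x + r • ξ) - g x) (unitBallLaw μ) :=
    hg.sub (integrable_const _)
  have hD : Integrable (fun ξ => D x (r • ξ)) (unitBallLaw μ) :=
    .of_bound (by fun_prop) (‖D x‖ * |r|) <| by
      filter_upwards [ae_unitBallLaw_norm_le_one μ] with ξ hξ
      calc ‖D x (r • ξ)‖ ≤ ‖D x‖ * ‖r • ξ‖ := (D x).le_opNorm _
        _ ≤ ‖D x‖ * |r| := by
          rw [norm_smul, Real.norm_eq_abs]
          gcongr
          exact mul_le_of_le_one_right (abs_nonneg r) hξ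
  rw [← integral_smul, integral_congr_ae (.of_forall fun ξ => smul_quotientError g D hr x ξ),
    integral_sub h_diff hD, integral_sub hg (integrable_const _)]
  simp [dilatedMean_apply, integral_smul, integral_clm_unitBallLaw]

lemma lintegral_enorm_dilatedMean_sub_le {q : ℝ} (hq : 1 ≤ q) {r : ℝ} (hr : 0 < r)
    (hD : Continuous D) :
    ∫⁻ x, ‖dilatedMean (unitBallLaw μ) r g x - g x‖ₑ ^ q ∂μ
      ≤ ENNReal.ofReal r ^ q
        * ∫⁻ p, ‖quotientError g D r p.1 p.2‖ₑ ^ q ∂(μ.prod (unitBallLaw μ)) := by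
  have error_cont := continuous_quotientError g.continuous hD r
  rw [lintegral_prod _ (by fun_prop), ← lintegral_const_mul' _ _ (by finiteness)]
  refine lintegral_mono fun x => ?_
  rw [dilatedMean_sub_eq_smul_integral_quotientError μ g D hr.ne', enorm_smul,
    Real.enorm_of_nonneg hr.le, ENNReal.mul_rpow_of_nonneg _ _ (by linarith)]
  gcongr
  exact enorm_integral_rpow_le _ (by fun_prop : Continuous _).aestronglyMeasurable hq

end UnitBallMeans

section ScaleRatio

variable (E : Type*) [AddCommGroup E] [Module ℝ E]

/-- The ratio of consecutive scales: large enough for the walk to forget, at each scale, a shift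
of the size of the previous one, and for the weighted errors below to decay geometrically. -/
def scaleRatio : ℝ := max 4 (Module.finrank ℝ E)

lemma four_le_scaleRatio : 4 ≤ scaleRatio E := le_max_left _ _

lemma finrank_le_scaleRatio : Module.finrank ℝ E ≤ scaleRatio E := le_max_right _ _

end ScaleRatio

section QuotientError

variable {E : Type*} [NormedAddCommGroup E] [NormedSpace ℝ E] [MeasurableSpace E] [BorelSpace E]
  [FiniteDimensional ℝ E] (μ : Measure E) [μ.IsAddHaarMeasure]
variable {Z : Type*} [NormedAddCommGroup Z] [NormedSpace ℝ Z]

/-- The `q`-th power of the `L_q` norm of the differentiation error, at scale `a i`, of the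
`i`-th iterated mean of a function `g` with derivative `D`. -/
def meanQuotientError (q : ℝ) (a : ℕ → ℝ) (g : E →ᵇ Z) (D : E →ᵇ E →L[ℝ] Z) (i : ℕ) : ℝ≥0∞ :=
  ∫⁻ p, ‖quotientError (iteratedMean (unitBallLaw μ) a g i) (iteratedMean (unitBallLaw μ) a D i)
    (a i) p.1 p.2‖ₑ ^ q ∂(μ.prod (unitBallLaw μ))

variable {a : ℕ → ℝ} {g : E →ᵇ Z} {D : E →ᵇ E →L[ℝ] Z}

lemma lintegral_quotientError_iteratedMean_le [CompleteSpace Z] {q : ℝ} (hq : 2 ≤ q)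
    (ha : ∀ i, 0 < a i) (ha_ratio : ∀ i, scaleRatio E * a i ≤ a (i + 1))
    (hg : ∀ x, HasFDerivAt g (D x) x) (i : ℕ) {ξ : E} (hξ : ‖ξ‖ ≤ 1) :
    ∫⁻ x, ‖quotientError (iteratedMean (unitBallLaw μ) a g i) (iteratedMean (unitBallLaw μ) a D i)
        (a i) x ξ‖ₑ ^ q ∂μ
      ≤ (2 ^ q) ^ 4 * (meanIncrement μ (unitBallLaw μ) q a
          ((ContinuousLinearMap.apply ℝ Z ξ).compLeftContinuousBounded E D) i
        + meanIncrement μ (unitBallLaw μ) q a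
          ((ContinuousLinearMap.apply ℝ Z ξ).compLeftContinuousBounded E D) (i + 1)) := by
  refine lintegral_enorm_quotientError_le μ (by linarith)
    (iteratedMean_hasFDerivAt (unitBallLaw μ) hg a i) (by fun_prop) (ha i).ne' fun θ hθ => ?_
  have derivative_along : (fun x => iteratedMean (unitBallLaw μ) a D i x ξ) =
      iteratedMean (unitBallLaw μ) a
        ((ContinuousLinearMap.apply ℝ Z ξ).compLeftContinuousBounded E D) i := by
    rw [iteratedMean_clm_comp]
    rfl
  rw [derivative_along]
  refine shiftDeviation_iteratedMean_le μ hq ha (fun i => ?_) (fun i => ?_) _ ?_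
  · exact (le_mul_of_one_le_left (ha i).le
      (by linarith [four_le_scaleRatio E])).trans (ha_ratio i)
  · exact (mul_le_mul_of_nonneg_right (finrank_le_scaleRatio E) (ha i).le).trans (ha_ratio i)
  · rw [norm_smul, norm_smul, Real.norm_of_nonneg hθ.1.le, Real.norm_of_nonneg (ha i).le]
    calc θ * (a i * ‖ξ‖) ≤ 1 * (a i * 1) := by
          gcongr
          exacts [mul_nonneg (ha i).le (norm_nonneg ξ), hθ.2, (ha i).le]
      _ = a i := by ring

end QuotientError

section QuotientErrorSum

variable {E : Type} [NormedAddCommGroup E] [NormedSpace ℝ E] [MeasurableSpace E] [BorelSpace E]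
  [FiniteDimensional ℝ E] (μ : Measure E) [μ.IsAddHaarMeasure]
variable {Y : Type*} [NormedAddCommGroup Y] [NormedSpace ℝ Y] [CompleteSpace Y]

theorem sum_meanQuotientError_le {q m : ℝ} (hq : 2 ≤ q) (hm : MartCotypeBound q Y m) {a : ℕ → ℝ}
    (ha : ∀ i, 0 < a i) (ha_ratio : ∀ i, scaleRatio E * a i ≤ a (i + 1)) {g : E →ᵇ Y}
    {D : E →ᵇ E →L[ℝ] Y} (hg : ∀ x, HasFDerivAt g (D x) x) (J : ℕ) :
    ∑ i ∈ Finset.range J, meanQuotientError μ q a g D i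
      ≤ (2 ^ q) ^ 4 * (2 * (ENNReal.ofReal m ^ q * ∫⁻ x, ‖D x‖ₑ ^ q ∂μ)) := by
  set e : ℕ → E → E → Y := fun i => quotientError (iteratedMean (unitBallLaw μ) a g i)
    (iteratedMean (unitBallLaw μ) a D i) (a i)
  have e_meas : ∀ i, Measurable fun p : E × E => ‖e i p.1 p.2‖ₑ ^ q := fun i =>
    (continuous_quotientError (by fun_prop) (by fun_prop) _).enorm.measurable.pow_const q
  have fixed_direction : ∀ ξ : E, ‖ξ‖ ≤ 1 →
      ∑ i ∈ Finset.range J, ∫⁻ x, ‖e i x ξ‖ₑ ^ q ∂μ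
        ≤ (2 ^ q) ^ 4 * (2 * (ENNReal.ofReal m ^ q * ∫⁻ x, ‖D x‖ₑ ^ q ∂μ)) := by
    intro ξ hξ
    set Dξ : E →ᵇ Y := (ContinuousLinearMap.apply ℝ Y ξ).compLeftContinuousBounded E D
    have norm_le : ∀ x, ‖Dξ x‖ₑ ≤ ‖D x‖ₑ := fun x => enorm_le_iff_norm_le.2 <|
      (D x).le_of_opNorm_le_of_le le_rfl hξ |>.trans_eq (mul_one _)
    calc ∑ i ∈ Finset.range J, ∫⁻ x, ‖e i x ξ‖ₑ ^ q ∂μ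
        ≤ ∑ i ∈ Finset.range J, (2 ^ q) ^ 4 * (meanIncrement μ (unitBallLaw μ) q a Dξ i
            + meanIncrement μ (unitBallLaw μ) q a Dξ (i + 1)) := Finset.sum_le_sum fun i _ =>
          lintegral_quotientError_iteratedMean_le μ hq ha ha_ratio hg i hξ
      _ ≤ (2 ^ q) ^ 4 * (2 * (ENNReal.ofReal m ^ q * ∫⁻ x, ‖Dξ x‖ₑ ^ q ∂μ)) := by
          rw [← Finset.mul_sum]
          gcongr
          exact sum_consecutive_meanIncrement_le μ (by linarith) hm a Dξ J
      _ ≤ _ := by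
          gcongr with x
          exact norm_le x
  calc ∑ i ∈ Finset.range J, meanQuotientError μ q a g D i
      = ∫⁻ ξ, ∑ i ∈ Finset.range J, ∫⁻ x, ‖e i x ξ‖ₑ ^ q ∂μ ∂(unitBallLaw μ) := by
        rw [lintegral_finsetSum _ fun i _ => (e_meas i).lintegral_prod_left']
        exact Finset.sum_congr rfl fun i _ => lintegral_prod_symm' _ (e_meas i)
    _ ≤ ∫⁻ _, (2 ^ q) ^ 4 * (2 * (ENNReal.ofReal m ^ q * ∫⁻ x, ‖D x‖ₑ ^ q ∂μ))
          ∂(unitBallLaw μ) := lintegral_mono_ae <| by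
        filter_upwards [ae_unitBallLaw_norm_le_one μ] with ξ hξ
        exact fixed_direction ξ hξ
    _ = _ := by simp

end QuotientErrorSum

section Contraction

lemma sum_range_le_of_two_mul_succ_le {s e : ℕ → ℝ≥0∞} (h : ∀ i, 2 * s (i + 1) ≤ s i + e i)
    (J : ℕ) : ∑ i ∈ Finset.range J, s i ≤ 2 * s 0 + ∑ i ∈ Finset.range J, e i := by
  suffices ∑ i ∈ Finset.range J, s i + 2 * s J ≤ 2 * s 0 + ∑ i ∈ Finset.range J, e i from
    le_self_add.trans this
  induction J with
  | zero => simp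
  | succ J ih =>
    rw [Finset.sum_range_succ, Finset.sum_range_succ]
    calc ∑ i ∈ Finset.range J, s i + s J + 2 * s (J + 1)
        ≤ ∑ i ∈ Finset.range J, s i + s J + (s J + e J) := by gcongr; exact h J
      _ = ∑ i ∈ Finset.range J, s i + 2 * s J + e J := by ring
      _ ≤ 2 * s 0 + ∑ i ∈ Finset.range J, e i + e J := by gcongr
      _ = _ := add_assoc _ _ _

lemma ofReal_inv_rpow_mul_ofReal_rpow {q r : ℝ} (hq : 0 ≤ q) (hr : 0 < r) :
    ENNReal.ofReal r⁻¹ ^ q * ENNReal.ofReal r ^ q = 1 := by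
  rw [← ENNReal.mul_rpow_of_nonneg _ _ hq, ← ENNReal.ofReal_mul (by positivity),
    inv_mul_cancel₀ hr.ne', ENNReal.ofReal_one, ENNReal.one_rpow]

lemma two_mul_two_rpow_mul_ofReal_inv_rpow_le {q r r' : ℝ} (hq : 1 ≤ q) (hr : 0 < r)
    (hr' : 4 * r ≤ r') : 2 * 2 ^ q * ENNReal.ofReal r'⁻¹ ^ q ≤ ENNReal.ofReal r⁻¹ ^ q :=
  calc 2 * 2 ^ q * ENNReal.ofReal r'⁻¹ ^ q ≤ 2 ^ q * 2 ^ q * ENNReal.ofReal r'⁻¹ ^ q := by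
        gcongr
        simpa using ENNReal.rpow_le_rpow_of_exponent_le (x := 2) (by norm_num) hq
    _ = ENNReal.ofReal (4 * r'⁻¹) ^ q := by
        rw [← ENNReal.mul_rpow_of_nonneg _ _ (by linarith),
          ← ENNReal.mul_rpow_of_nonneg _ _ (by linarith), ENNReal.ofReal_mul (by norm_num)]
        norm_num
    _ ≤ ENNReal.ofReal r⁻¹ ^ q := by
        gcongr
        rw [← div_eq_mul_inv, ← one_div, div_le_div_iff₀ (by linarith) hr]
        linarith

end Contraction

section MeanApproximation

variable {E : Type*} [NormedAddCommGroup E] [NormedSpace ℝ E] [MeasurableSpace E] [BorelSpace E]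
  [FiniteDimensional ℝ E] (μ : Measure E) [μ.IsAddHaarMeasure]
variable {Z : Type*} [NormedAddCommGroup Z] [NormedSpace ℝ Z]

/-- The `q`-th power of the `L_q` distance from `f` to the `i`-th iterated mean of `g`, relative to
the scale `a i`. -/
def meanApproxError (q : ℝ) (a : ℕ → ℝ) (f : E → Z) (g : E →ᵇ Z) (i : ℕ) : ℝ≥0∞ :=
  ENNReal.ofReal (a i)⁻¹ ^ q * ∫⁻ x, ‖f x - iteratedMean (unitBallLaw μ) a g i x‖ₑ ^ q ∂μ

lemma two_mul_meanApproxError_succ_le [CompleteSpace Z] {q : ℝ} (hq : 1 ≤ q) {a : ℕ → ℝ}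
    (ha : ∀ i, 0 < a i) (ha_ratio : ∀ i, 4 * a i ≤ a (i + 1)) (f : E → Z) (g : E →ᵇ Z)
    (D : E →ᵇ E →L[ℝ] Z) (i : ℕ) :
    2 * meanApproxError μ q a f g (i + 1)
      ≤ meanApproxError μ q a f g i + meanQuotientError μ q a g D i := by
  set P := iteratedMean (unitBallLaw μ) a g
  set dev := fun i => ∫⁻ x, ‖f x - P i x‖ₑ ^ q ∂μ
  have one_step : ∫⁻ x, ‖P i x - P (i + 1) x‖ₑ ^ q ∂μ
      ≤ ENNReal.ofReal (a i) ^ q * meanQuotientError μ q a g D i := by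
    simp only [enorm_sub_rev (P i _)]
    exact lintegral_enorm_dilatedMean_sub_le μ (P i) (iteratedMean (unitBallLaw μ) a D i) hq (ha i)
      (by fun_prop)
  calc 2 * meanApproxError μ q a f g (i + 1)
      ≤ 2 * (ENNReal.ofReal (a (i + 1))⁻¹ ^ q
          * (2 ^ q * (dev i + ENNReal.ofReal (a i) ^ q * meanQuotientError μ q a g D i))) := by
        unfold meanApproxError
        gcongr
        refine (lintegral_enorm_sub_rpow_le μ f hq ?_).trans (by gcongr)
        exact (measurable_enorm_sub_rpow (by fun_prop) (by fun_prop) q).aemeasurable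
    _ = 2 * 2 ^ q * ENNReal.ofReal (a (i + 1))⁻¹ ^ q
          * (dev i + ENNReal.ofReal (a i) ^ q * meanQuotientError μ q a g D i) := by ring
    _ ≤ ENNReal.ofReal (a i)⁻¹ ^ q
          * (dev i + ENNReal.ofReal (a i) ^ q * meanQuotientError μ q a g D i) := by
        gcongr ?_ * _
        exact two_mul_two_rpow_mul_ofReal_inv_rpow_le hq (ha i) (ha_ratio i)
    _ = _ := by
        rw [mul_add, ← mul_assoc, ofReal_inv_rpow_mul_ofReal_rpow (by linarith) (ha i), one_mul]
        rfl

end MeanApproximation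

section AffineDeviation

variable {E : Type*} [NormedAddCommGroup E] [NormedSpace ℝ E] [MeasurableSpace E]
variable {Z : Type*} [NormedAddCommGroup Z] [NormedSpace ℝ Z]

/-- The `q`-th power of the `L_q` distance from `f` to the `1`-Lipschitz affine maps on the ball of
center `x` and radius `t`, with respect to the uniform distribution on that ball. -/
def affineDeviation (μ : Measure E) (q : ℝ) (f : E → Z) (x : E) (t : ℝ) : ℝ≥0∞ :=
  ⨅ Λ ∈ {Λ : E →ᵃ[ℝ] Z | ∀ u v, ‖Λ u - Λ v‖ ≤ ‖u - v‖},
    ∫⁻ ξ, ‖f (x + t • ξ) - Λ (x + t • ξ)‖ₑ ^ q ∂(unitBallLaw μ)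

variable [BorelSpace E] [FiniteDimensional ℝ E] (μ : Measure E) {q r : ℝ} {g : E → Z}
  {D : E → E →L[ℝ] Z}

lemma affineDeviation_le (hq : 1 ≤ q) (hr : 0 < r) (f : E → Z) (hg : Continuous g) {x : E}
    (hDx : ‖D x‖ ≤ 1) :
    affineDeviation μ q f x r
      ≤ 2 ^ q * (∫⁻ ξ, ‖f (x + r • ξ) - g (x + r • ξ)‖ₑ ^ q ∂(unitBallLaw μ)
        + ENNReal.ofReal r ^ q * ∫⁻ ξ, ‖quotientError g D r x ξ‖ₑ ^ q ∂(unitBallLaw μ)) := by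
  let Λ : E →ᵃ[ℝ] Z := (D x).toLinearMap.toAffineMap + AffineMap.const ℝ E (g x - D x x)
  have Λ_apply : ∀ y, Λ y = D x y + (g x - D x x) := fun _ => rfl
  have Λ_lipschitz : ∀ u v, ‖Λ u - Λ v‖ ≤ ‖u - v‖ := fun u v => by
    rw [Λ_apply, Λ_apply, add_sub_add_right_eq_sub, ← map_sub]
    exact (D x).le_of_opNorm_le_of_le hDx le_rfl |>.trans_eq (one_mul _)
  have Λ_error : ∀ ξ, ‖g (x + r • ξ) - Λ (x + r • ξ)‖ₑ ^ q
      = ENNReal.ofReal r ^ q * ‖quotientError g D r x ξ‖ₑ ^ q := fun ξ => by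
    rw [← ENNReal.mul_rpow_of_nonneg _ _ (by linarith), ← Real.enorm_of_nonneg hr.le, ← enorm_smul,
      smul_quotientError g D hr.ne', Λ_apply, map_add]
    congr 2
    abel
  have Λ_cont : Continuous Λ := Λ.continuous_of_finiteDimensional
  have Λ_meas : Measurable fun ξ => ‖g (x + r • ξ) - Λ (x + r • ξ)‖ₑ ^ q :=
    measurable_enorm_sub_rpow (by fun_prop) (by fun_prop) q
  refine (iInf₂_le Λ Λ_lipschitz).trans ?_
  refine (lintegral_enorm_sub_rpow_le _ _ hq Λ_meas.aemeasurable).trans_eq ?_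
  simp only [Λ_error]
  rw [lintegral_const_mul' _ _ (by finiteness)]

lemma lintegral_affineDeviation_le [μ.IsAddHaarMeasure] (hq : 1 ≤ q) (hr : 0 < r) {f : E → Z}
    (hf : Continuous f) (hg : Continuous g) (hD : Continuous D) (hD_le : ∀ x, ‖D x‖ ≤ 1) :
    ∫⁻ x, affineDeviation μ q f x r ∂μ
      ≤ 2 ^ q * (∫⁻ x, ‖f x - g x‖ₑ ^ q ∂μ + ENNReal.ofReal r ^ q
        * ∫⁻ p, ‖quotientError g D r p.1 p.2‖ₑ ^ q ∂(μ.prod (unitBallLaw μ))) := by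
  have error_meas : Measurable fun p : E × E => ‖quotientError g D r p.1 p.2‖ₑ ^ q :=
    (continuous_quotientError hg hD r).enorm.measurable.pow_const q
  have fg_meas : Measurable fun x => ‖f x - g x‖ₑ ^ q := measurable_enorm_sub_rpow hf hg q
  have fg_translate := lintegral_prod_translate μ (unitBallLaw μ) fg_meas r
  rw [measure_univ, one_mul] at fg_translate
  have error_meas' : Measurable fun x => ∫⁻ ξ, ‖quotientError g D r x ξ‖ₑ ^ q ∂(unitBallLaw μ) :=
    error_meas.lintegral_prod_right'
  refine (lintegral_mono fun x => affineDeviation_le μ hq hr f hg (hD_le x)).trans_eq ?_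
  rw [lintegral_const_mul' _ _ (by finiteness), lintegral_add_right _ (by fun_prop),
    lintegral_const_mul _ error_meas', ← fg_translate, lintegral_prod _ (by fun_prop),
    lintegral_prod _ error_meas.aemeasurable]

end AffineDeviation

section AffineDeviationSum

variable {E : Type} [NormedAddCommGroup E] [NormedSpace ℝ E] [MeasurableSpace E] [BorelSpace E]
  [FiniteDimensional ℝ E] (μ : Measure E) [μ.IsAddHaarMeasure]
variable {Y : Type*} [NormedAddCommGroup Y] [NormedSpace ℝ Y]

lemma ofReal_inv_rpow_mul_lintegral_affineDeviation_le {q : ℝ} (hq : 1 ≤ q) {a : ℕ → ℝ} {i : ℕ}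
    (ha : 0 < a i) {f : E → Y} (hf : Continuous f) (g : E →ᵇ Y) {D : E →ᵇ E →L[ℝ] Y}
    (hD : ‖D‖ ≤ 1) :
    ENNReal.ofReal (a i)⁻¹ ^ q * ∫⁻ x, affineDeviation μ q f x (a i) ∂μ
      ≤ 2 ^ q * (meanApproxError μ q a f g i + meanQuotientError μ q a g D i) := by
  have bound := lintegral_affineDeviation_le μ hq ha hf
    (iteratedMean (unitBallLaw μ) a g i).continuous
    (iteratedMean (unitBallLaw μ) a D i).continuous fun x =>
      ((BoundedContinuousFunction.norm_coe_le_norm _ x).trans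
        (norm_iteratedMean_le (unitBallLaw μ) a D i)).trans hD
  refine (mul_le_mul_right bound _).trans_eq ?_
  rw [mul_left_comm, mul_add, ← mul_assoc (ENNReal.ofReal (a i)⁻¹ ^ q) (ENNReal.ofReal _ ^ q),
    ofReal_inv_rpow_mul_ofReal_rpow (by linarith) ha, one_mul]
  rfl

theorem sum_lintegral_affineDeviation_le_of_hasFDerivAt [CompleteSpace Y] {q m : ℝ} (hq : 2 ≤ q)
    (hm : MartCotypeBound q Y m) {a : ℕ → ℝ} (ha : ∀ i, 0 < a i)
    (ha_ratio : ∀ i, scaleRatio E * a i ≤ a (i + 1)) {f : E → Y} (hf : Continuous f) {g : E →ᵇ Y}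
    {D : E →ᵇ E →L[ℝ] Y} (hg : ∀ x, HasFDerivAt g (D x) x) (hD : ‖D‖ ≤ 1) (J : ℕ) :
    ∑ i ∈ Finset.range J, ENNReal.ofReal (a i)⁻¹ ^ q * ∫⁻ x, affineDeviation μ q f x (a i) ∂μ
      ≤ 2 ^ q * (2 * (ENNReal.ofReal (a 0)⁻¹ ^ q * ∫⁻ x, ‖f x - g x‖ₑ ^ q ∂μ))
        + (2 ^ q) ^ 6 * (ENNReal.ofReal m ^ q * ∫⁻ x, ‖D x‖ₑ ^ q ∂μ) := by
  set s := meanApproxError μ q a f g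
  set e := meanQuotientError μ q a g D
  have ha_four : ∀ i, 4 * a i ≤ a (i + 1) := fun i =>
    (mul_le_mul_of_nonneg_right (four_le_scaleRatio E) (ha i).le).trans (ha_ratio i)
  calc ∑ i ∈ Finset.range J, ENNReal.ofReal (a i)⁻¹ ^ q * ∫⁻ x, affineDeviation μ q f x (a i) ∂μ
      ≤ ∑ i ∈ Finset.range J, 2 ^ q * (s i + e i) := Finset.sum_le_sum fun i _ =>
        ofReal_inv_rpow_mul_lintegral_affineDeviation_le μ (by linarith) (ha i) hf g hD
    _ = 2 ^ q * (∑ i ∈ Finset.range J, s i + ∑ i ∈ Finset.range J, e i) := by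
        rw [← Finset.mul_sum, Finset.sum_add_distrib]
    _ ≤ 2 ^ q * (2 * s 0 + ∑ i ∈ Finset.range J, e i + ∑ i ∈ Finset.range J, e i) := by
        gcongr
        exact sum_range_le_of_two_mul_succ_le
          (two_mul_meanApproxError_succ_le μ (by linarith) ha ha_four f g D) J
    _ = 2 ^ q * (2 * s 0) + 2 ^ q * 2 * ∑ i ∈ Finset.range J, e i := by ring
    _ ≤ 2 ^ q * (2 * s 0)
        + 2 ^ q * 2 * ((2 ^ q) ^ 4 * (2 * (ENNReal.ofReal m ^ q * ∫⁻ x, ‖D x‖ₑ ^ q ∂μ))) := by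
        gcongr
        exact sum_meanQuotientError_le μ hq hm ha ha_ratio hg J
    _ = 2 ^ q * (2 * s 0)
        + (2 ^ q) ^ 5 * 4 * (ENNReal.ofReal m ^ q * ∫⁻ x, ‖D x‖ₑ ^ q ∂μ) := by ring
    _ ≤ _ := by
        rw [pow_succ _ 5]
        gcongr ?_ + _ * ?_ * _
        · exact le_rfl
        · exact four_le_two_rpow hq

end AffineDeviationSum

section Mollification

variable {E : Type*} [NormedAddCommGroup E] [NormedSpace ℝ E] [FiniteDimensional ℝ E]
variable {Z : Type*} [NormedAddCommGroup Z] [NormedSpace ℝ Z]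

lemma lipschitzWith_normed_convolution [MeasurableSpace E] [BorelSpace E] (μ : Measure E)
    [μ.IsAddHaarMeasure] (φ : ContDiffBump (0 : E)) {K : ℝ≥0} {f : E → Z}
    (hf : LipschitzWith K f) :
    LipschitzWith K (convolution (φ.normed μ) f (ContinuousLinearMap.lsmul ℝ ℝ) μ) := by
  have φ_cont : Continuous (φ.normed μ) := φ.continuous_normed
  have f_cont : Continuous f := hf.continuous
  have integrable_shift : ∀ x, Integrable (fun t => φ.normed μ t • f (x - t)) μ := fun x =>
    (φ_cont.smul (by fun_prop)).integrable_of_hasCompactSupport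
      φ.hasCompactSupport_normed.smul_right
  refine LipschitzWith.of_dist_le_mul fun x y => ?_
  simp only [dist_eq_norm, convolution, ContinuousLinearMap.lsmul_apply]
  rw [← integral_sub (integrable_shift x) (integrable_shift y)]
  calc _ ≤ ∫ t, φ.normed μ t * (K * ‖x - y‖) ∂μ := by
        refine norm_integral_le_of_norm_le (φ.integrable_normed.mul_const _)
          (ae_of_all _ fun t => ?_)
        rw [← smul_sub, norm_smul, Real.norm_of_nonneg (φ.nonneg_normed t)]
        gcongr
        · exact φ.nonneg_normed t
        · simpa [dist_eq_norm] using hf.dist_le_mul (x - t) (y - t)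
    _ = _ := by rw [integral_mul_const, φ.integral_normed, one_mul]

lemma exists_contDiff_lipschitzWith_norm_sub_le [CompleteSpace Z] {f : E → Z}
    (hf : LipschitzWith 1 f) {δ : ℝ} (hδ : 0 < δ) :
    ∃ g : E → Z, ContDiff ℝ 1 g ∧ LipschitzWith 1 g ∧ tsupport g ⊆ cthickening δ (tsupport f) ∧
      ∀ x, ‖f x - g x‖ ≤ δ := by
  let : MeasurableSpace E := borel E
  have : BorelSpace E := ⟨rfl⟩
  let μ : Measure E := Measure.addHaar
  let φ : ContDiffBump (0 : E) := ⟨δ / 2, δ, by positivity, by linarith⟩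
  refine ⟨_, φ.hasCompactSupport_normed.contDiff_convolution_left (n := 1) _ φ.contDiff_normed
    hf.continuous.locallyIntegrable, lipschitzWith_normed_convolution μ φ hf,
    closure_minimal ?_ isClosed_cthickening, fun x => ?_⟩
  · refine (support_convolution_subset _).trans ?_
    rintro - ⟨u, hu, v, hv, rfl⟩
    rw [φ.support_normed_eq, mem_ball_zero_iff] at hu
    exact mem_cthickening_of_dist_le _ v δ _ (subset_tsupport f hv)
      (by simpa [dist_eq_norm] using hu.le)
  · rw [norm_sub_rev, ← dist_eq_norm]
    refine ContDiffBump.dist_normed_convolution_le hf.continuous.aestronglyMeasurable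
      fun y hy => ?_
    exact (hf.dist_le_mul y x).trans (by simpa using (mem_ball.1 hy).le)

end Mollification

section SupportedIntegral

variable {E : Type*} [MeasurableSpace E] {Z : Type*} [NormedAddCommGroup Z]

lemma lintegral_enorm_rpow_le_of_support_subset (μ : Measure E) {q : ℝ} (hq : 0 < q) {F : E → Z}
    {S : Set E} {c : ℝ≥0∞} (hF_support : Function.support F ⊆ S) (hF : ∀ x, ‖F x‖ₑ ≤ c) :
    ∫⁻ x, ‖F x‖ₑ ^ q ∂μ ≤ c ^ q * μ S := by
  refine (lintegral_mono fun x => ?_).trans (lintegral_indicator_const_le S (c ^ q))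
  by_cases hx : F x = 0
  · simp [hx, ENNReal.zero_rpow_of_pos hq]
  · rw [indicator_of_mem (hF_support hx)]
    gcongr
    exact hF x

end SupportedIntegral

section Limit

variable {E : Type} [NormedAddCommGroup E] [NormedSpace ℝ E] [MeasurableSpace E] [BorelSpace E]
  [FiniteDimensional ℝ E] (μ : Measure E) [μ.IsAddHaarMeasure]
variable {Y : Type*} [NormedAddCommGroup Y] [NormedSpace ℝ Y] [CompleteSpace Y]
variable {q m : ℝ} {a : ℕ → ℝ} {f : E → Y}

lemma sum_lintegral_affineDeviation_le_cthickening (hq : 2 ≤ q) (hm : MartCotypeBound q Y m)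
    (ha : ∀ i, 0 < a i) (ha_ratio : ∀ i, scaleRatio E * a i ≤ a (i + 1))
    (hf : HasCompactSupport f) (hf_lip : LipschitzWith 1 f) (J : ℕ) {δ : ℝ} (hδ : 0 < δ) :
    ∑ i ∈ Finset.range J, ENNReal.ofReal (a i)⁻¹ ^ q * ∫⁻ x, affineDeviation μ q f x (a i) ∂μ
      ≤ 2 ^ q * (2 * (ENNReal.ofReal (a 0)⁻¹ ^ q
          * (ENNReal.ofReal δ ^ q * μ (cthickening δ (tsupport f)))))
        + (2 ^ q) ^ 6 * (ENNReal.ofReal m ^ q * μ (cthickening δ (tsupport f))) := by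
  obtain ⟨g, g_contDiff, g_lip, g_support, f_sub_g⟩ :=
    exists_contDiff_lipschitzWith_norm_sub_le hf_lip hδ
  have g_compact : HasCompactSupport g :=
    hf.isCompact.cthickening.of_isClosed_subset (isClosed_tsupport g) g_support
  have D_bound : ∀ x, ‖fderiv ℝ g x‖ ≤ 1 := fun x => norm_fderiv_le_of_lipschitz ℝ g_lip
  obtain ⟨c, hc⟩ := g_contDiff.continuous.bounded_above_of_compact_support g_compact
  let G : E →ᵇ Y := .ofNormedAddCommGroup g g_contDiff.continuous c hc
  let D : E →ᵇ E →L[ℝ] Y :=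
    .ofNormedAddCommGroup (fderiv ℝ g) (g_contDiff.continuous_fderiv one_ne_zero) 1 D_bound
  have f_sub_g_support : Function.support (fun x => f x - g x) ⊆ cthickening δ (tsupport f) :=
    (Function.support_sub f g).trans <| union_subset
      ((subset_tsupport f).trans (self_subset_cthickening _)) ((subset_tsupport g).trans g_support)
  refine (sum_lintegral_affineDeviation_le_of_hasFDerivAt μ hq hm ha ha_ratio hf_lip.continuous
    (g := G) (D := D) (fun x => (g_contDiff.differentiable one_ne_zero x).hasFDerivAt)
    (BoundedContinuousFunction.norm_ofNormedAddCommGroup_le _ zero_le_one _) J).trans ?_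
  gcongr
  · refine lintegral_enorm_rpow_le_of_support_subset μ (by linarith) f_sub_g_support fun x => ?_
    rw [← ofReal_norm]
    exact ENNReal.ofReal_le_ofReal (f_sub_g x)
  · refine (lintegral_enorm_rpow_le_of_support_subset μ (c := 1) (by linarith)
      ((support_fderiv_subset ℝ).trans g_support) fun x => ?_).trans_eq (by simp)
    simpa [← ofReal_norm] using (ENNReal.ofReal_le_ofReal (D_bound x) : ENNReal.ofReal ‖D x‖ ≤ _)

theorem sum_lintegral_affineDeviation_le (hq : 2 ≤ q) (hm : MartCotypeBound q Y m)
    (ha : ∀ i, 0 < a i) (ha_ratio : ∀ i, scaleRatio E * a i ≤ a (i + 1))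
    (hf : HasCompactSupport f) (hf_lip : LipschitzWith 1 f) (J : ℕ) :
    ∑ i ∈ Finset.range J, ENNReal.ofReal (a i)⁻¹ ^ q * ∫⁻ x, affineDeviation μ q f x (a i) ∂μ
      ≤ (2 ^ q) ^ 6 * (ENNReal.ofReal m ^ q * μ (tsupport f)) := by
  have hq_pos : 0 < q := by linarith
  have thickening_lim : Tendsto (fun δ => μ (cthickening δ (tsupport f))) (𝓝[>] 0)
      (𝓝 (μ (tsupport f))) :=
    (tendsto_measure_cthickening_of_isCompact hf.isCompact).mono_left nhdsWithin_le_nhds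
  have rpow_lim : Tendsto (fun δ : ℝ => ENNReal.ofReal δ ^ q) (𝓝[>] 0) (𝓝 0) := by
    refine Tendsto.mono_left ?_ nhdsWithin_le_nhds
    simpa [Function.comp_def, ENNReal.zero_rpow_of_pos hq_pos] using
      ((ENNReal.continuous_rpow_const (y := q)).comp ENNReal.continuous_ofReal).tendsto 0
  have error_lim : Tendsto (fun δ : ℝ => ENNReal.ofReal δ ^ q * μ (cthickening δ (tsupport f)))
      (𝓝[>] 0) (𝓝 0) := by
    simpa using ENNReal.Tendsto.mul rpow_lim (.inr hf.isCompact.measure_lt_top.ne) thickening_lim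
      (.inr ENNReal.zero_ne_top)
  refine ge_of_tendsto (x := 𝓝[>] (0 : ℝ)) ?_ (eventually_mem_nhdsWithin.mono fun δ hδ =>
    sum_lintegral_affineDeviation_le_cthickening μ hq hm ha ha_ratio hf hf_lip J hδ)
  have term_lim := ENNReal.Tendsto.const_mul (a := 2 ^ q) (ENNReal.Tendsto.const_mul (a := 2)
    (ENNReal.Tendsto.const_mul (a := ENNReal.ofReal (a 0)⁻¹ ^ q) error_lim
      (.inr (by finiteness))) (.inr (by finiteness))) (.inr (by finiteness))
  have main_lim := ENNReal.Tendsto.const_mul (a := (2 ^ q) ^ 6) (ENNReal.Tendsto.const_mul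
    (a := ENNReal.ofReal m ^ q) thickening_lim (.inr (by finiteness))) (.inr (by finiteness))
  simpa using term_lim.add main_lim

end Limit

section Scales

lemma exists_range_image_int_superset (s : Finset ℤ) :
    ∃ (k : ℤ) (J : ℕ), s ⊆ (Finset.range J).image fun i : ℕ => k + i := by
  obtain ⟨k, hk⟩ := s.bddBelow
  obtain ⟨l, hl⟩ := s.bddAbove
  refine ⟨k, (l - k + 1).toNat, fun j hj => Finset.mem_image.2 ⟨(j - k).toNat, ?_, ?_⟩⟩
  · have := hk hj
    have := hl hj
    grind
  · have := hk hj
    grind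

lemma tsum_int_le_of_sum_range_le {h : ℤ → ℝ≥0∞} {B : ℝ≥0∞}
    (hB : ∀ (k : ℤ) (J : ℕ), ∑ i ∈ Finset.range J, h (k + i) ≤ B) : ∑' k, h k ≤ B := by
  rw [ENNReal.tsum_eq_iSup_sum]
  refine iSup_le fun s => ?_
  obtain ⟨k, J, hs⟩ := exists_range_image_int_superset s
  refine (Finset.sum_le_sum_of_subset hs).trans ?_
  rw [Finset.sum_image fun i _ j _ hij => by simpa using hij]
  exact hB k J

lemma lintegral_eq_setLIntegral_Ioc_tsum {h : ℝ → ℝ≥0∞} (hh : Measurable h) {l : ℝ}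
    (hl : 0 < l) : ∫⁻ s, h s = ∫⁻ s in Ioc 0 l, ∑' k : ℤ, h (s + k * l) := by
  have shift_preimage : ∀ k : ℤ, (· + k * l) ⁻¹' Ioc (k • l) ((k + 1) • l) = Ioc 0 l :=
    fun k => by
      rw [preimage_add_const_Ioc]
      congr 1 <;> simp [add_mul]
  rw [lintegral_tsum fun k : ℤ => Measurable.aemeasurable (by fun_prop),
    ← setLIntegral_univ h, ← iUnion_Ioc_zsmul hl,
    lintegral_iUnion (fun _ => measurableSet_Ioc) (pairwise_disjoint_Ioc_zsmul l)]
  refine tsum_congr fun k => ?_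
  rw [← shift_preimage k]
  exact ((measurePreserving_add_right volume (k * l)).setLIntegral_comp_preimage
    measurableSet_Ioc hh).symm

lemma lintegral_Ioi_zero_eq_lintegral_exp (h : ℝ → ℝ≥0∞) :
    ∫⁻ t in Ioi 0, h t = ∫⁻ s, ENNReal.ofReal (Real.exp s) * h (Real.exp s) := by
  rw [← Real.range_exp, ← image_univ, lintegral_image_eq_lintegral_abs_deriv_mul
    MeasurableSet.univ (fun x _ => (Real.hasDerivAt_exp x).hasDerivWithinAt)
    Real.exp_injective.injOn, Measure.restrict_univ]
  simp only [abs_of_pos (Real.exp_pos _)]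

/-- The exponential substitution turns `dt / t` into Lebesgue measure, which is tiled by the
translates of `(0, log b]`; each point of the tile generates one geometric progression. -/
lemma setLIntegral_div_rpow_le_of_sum_geometric_le {ψ : ℝ → ℝ≥0∞} (hψ : Measurable ψ)
    {q b : ℝ} (hb : 1 < b) {B : ℝ≥0∞}
    (hB : ∀ s, 0 < s → ∀ J : ℕ,
      ∑ i ∈ Finset.range J, ENNReal.ofReal (s * b ^ i)⁻¹ ^ q * ψ (s * b ^ i) ≤ B) :
    ∫⁻ t in Ioi (0 : ℝ), ψ t / ENNReal.ofReal (t ^ (q + 1)) ≤ ENNReal.ofReal (Real.log b) * B := by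
  let h : ℝ → ℝ≥0∞ := fun s => ENNReal.ofReal (Real.exp s)⁻¹ ^ q * ψ (Real.exp s)
  have h_meas : Measurable h := by fun_prop
  have substitution : ∀ s, ENNReal.ofReal (Real.exp s)
      * (ψ (Real.exp s) / ENNReal.ofReal (Real.exp s ^ (q + 1))) = h s := fun s => by
    have rpow_identity : Real.exp s * (Real.exp s ^ (q + 1))⁻¹ = (Real.exp s)⁻¹ ^ q := by
      rw [Real.rpow_add_one (by positivity), Real.inv_rpow (by positivity), mul_inv_rev,
        mul_inv_cancel_left₀ (by positivity)]
    rw [ENNReal.div_eq_inv_mul, ← mul_assoc, ← ENNReal.ofReal_inv_of_pos (by positivity),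
      ← ENNReal.ofReal_mul (by positivity), rpow_identity,
      ← ENNReal.ofReal_rpow_of_pos (by positivity)]
  rw [lintegral_Ioi_zero_eq_lintegral_exp]
  simp only [substitution]
  rw [lintegral_eq_setLIntegral_Ioc_tsum h_meas (Real.log_pos hb)]
  calc ∫⁻ s in Ioc 0 (Real.log b), ∑' k : ℤ, h (s + k * Real.log b)
      ≤ ∫⁻ _ in Ioc 0 (Real.log b), B := by
        refine lintegral_mono fun s => tsum_int_le_of_sum_range_le fun k J => ?_
        convert hB (Real.exp (s + k * Real.log b)) (Real.exp_pos _) J using 2 with i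
        have : Real.exp (s + (k + i : ℤ) * Real.log b)
            = Real.exp (s + k * Real.log b) * b ^ i := by
          rw [← Real.rpow_natCast, Real.rpow_def_of_pos (by linarith), ← Real.exp_add]
          push_cast
          ring_nf
        simp only [h, this]
    _ = _ := by simp [mul_comm]

end Scales

section BallAverage

variable {E : Type*} [NormedAddCommGroup E] [NormedSpace ℝ E] [MeasurableSpace E] [BorelSpace E]
  [FiniteDimensional ℝ E] (μ : Measure E)
variable {Z : Type*} [NormedAddCommGroup Z]

lemma cond_closedBall_eq_map_unitBallLaw [μ.IsAddHaarMeasure] (x : E) {t : ℝ} (ht : 0 < t) :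
    μ[|closedBall x t] = (unitBallLaw μ).map fun ξ => x + t • ξ := by
  set T : E → E := fun ξ => x + t • ξ
  have T_preimage : ∀ A, μ (T ⁻¹' A) = ENNReal.ofReal |(t ^ Module.finrank ℝ E)⁻¹| * μ A :=
    fun A => by
      rw [← measure_preimage_add μ x A, ← Measure.addHaar_preimage_smul μ ht.ne']
      rfl
  have T_ball : T ⁻¹' closedBall x t = closedBall 0 1 := by
    ext ξ
    simp only [T, mem_preimage, mem_closedBall_iff_norm, add_sub_cancel_left, norm_smul,
      Real.norm_of_nonneg ht.le, sub_zero]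
    exact mul_le_iff_le_one_right ht
  have factor_ne_zero : ENNReal.ofReal |(t ^ Module.finrank ℝ E)⁻¹| ≠ 0 := by
    simp [ht.ne']
  ext A hA
  rw [Measure.map_apply (by fun_prop) hA, unitBallLaw, cond_apply measurableSet_closedBall,
    cond_apply measurableSet_closedBall, ← T_ball, ← preimage_inter, T_preimage, T_preimage,
    ← ENNReal.div_eq_inv_mul, ← ENNReal.div_eq_inv_mul,
    ENNReal.mul_div_mul_left _ _ factor_ne_zero ENNReal.ofReal_ne_top]

lemma setLIntegral_closedBall_div_eq_lintegral_unitBallLaw [μ.IsAddHaarMeasure] (x : E) {t : ℝ}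
    (ht : 0 < t) {φ : E → ℝ≥0∞} (hφ : Measurable φ) :
    (∫⁻ y in closedBall x t, φ y ∂μ) / μ (closedBall x t)
      = ∫⁻ ξ, φ (x + t • ξ) ∂(unitBallLaw μ) := by
  rw [← lintegral_map (g := fun ξ => x + t • ξ) hφ (by fun_prop),
    ← cond_closedBall_eq_map_unitBallLaw μ x ht, ProbabilityTheory.cond,
    lintegral_smul_measure, ENNReal.div_eq_inv_mul, smul_eq_mul]

lemma continuous_lintegral_enorm_rpow_unitBallLaw {q : ℝ} (hq : 0 ≤ q) {F : E → Z}
    (hF : Continuous F) :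
    Continuous fun p : E × ℝ => ∫⁻ ξ, ‖F (p.1 + p.2 • ξ)‖ₑ ^ q ∂(unitBallLaw μ) := by
  let φ : E × ℝ → E → ℝ := fun p ξ => ‖F (p.1 + p.2 • ξ)‖ ^ q
  have φ_cont : Continuous φ.uncurry := by
    exact (Continuous.norm (by fun_prop)).rpow_const fun _ => .inr hq
  have restrict_eq : (unitBallLaw μ).restrict (closedBall 0 1) = unitBallLaw μ :=
    Measure.restrict_eq_self_of_ae_mem (ae_cond_mem measurableSet_closedBall)
  have lintegral_eq : ∀ p : E × ℝ, ∫⁻ ξ, ‖F (p.1 + p.2 • ξ)‖ₑ ^ q ∂(unitBallLaw μ)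
      = ENNReal.ofReal (∫ ξ in closedBall 0 1, φ p ξ ∂(unitBallLaw μ)) := fun p => by
    have φ_int : IntegrableOn (φ p) (closedBall 0 1) (unitBallLaw μ) :=
      (φ_cont.comp (Continuous.prodMk_right p)).continuousOn.integrableOn_compact
        (isCompact_closedBall 0 1)
    rw [ofReal_integral_eq_lintegral_ofReal φ_int (ae_of_all _ fun ξ => by positivity),
      restrict_eq]
    refine lintegral_congr fun ξ => ?_
    rw [← ENNReal.ofReal_rpow_of_nonneg (norm_nonneg _) hq, ofReal_norm]
  simp only [lintegral_eq]
  exact ENNReal.continuous_ofReal.comp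
    (continuous_parametric_integral_of_continuous φ_cont (isCompact_closedBall 0 1))

lemma measurable_affineDeviation [NormedSpace ℝ Z] {q : ℝ} (hq : 0 ≤ q) {f : E → Z}
    (hf : Continuous f) :
    Measurable fun p : E × ℝ => affineDeviation μ q f p.1 p.2 :=
  UpperSemicontinuous.measurable <| upperSemicontinuous_biInf fun Λ _ =>
    (continuous_lintegral_enorm_rpow_unitBallLaw μ hq
      (hf.sub Λ.continuous_of_finiteDimensional)).upperSemicontinuous

end BallAverage

section ScaleIntegral

lemma lintegral_lintegral_div_swap {α β : Type*} [MeasurableSpace α] [MeasurableSpace β]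
    (μ : Measure α) [SFinite μ] {ν : Measure β} [SFinite ν] {P : α → β → ℝ≥0∞}
    (hP : Measurable fun p : α × β => P p.1 p.2) {c : β → ℝ≥0∞} (hc : Measurable c) :
    ∫⁻ x, (∫⁻ t, P x t / c t ∂ν) ∂μ = ∫⁻ t, (∫⁻ x, P x t ∂μ) / c t ∂ν := by
  have P_fst_meas : ∀ t, Measurable fun x => P x t := fun t => hP.comp measurable_prodMk_right
  have div_meas : Measurable fun p : α × β => P p.1 p.2 / c p.2 := by fun_prop
  rw [lintegral_lintegral_swap div_meas.aemeasurable]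
  simp only [div_eq_mul_inv, fun t => lintegral_mul_const (μ := μ) (c t)⁻¹ (P_fst_meas t)]

variable {E : Type} [NormedAddCommGroup E] [NormedSpace ℝ E] [MeasurableSpace E] [BorelSpace E]
  [FiniteDimensional ℝ E] (μ : Measure E) [μ.IsAddHaarMeasure]
variable {Y : Type*} [NormedAddCommGroup Y] [NormedSpace ℝ Y] [CompleteSpace Y]

theorem lintegral_affineDeviation_div_rpow_le {q m : ℝ} (hq : 2 ≤ q) (hm : MartCotypeBound q Y m)
    {f : E → Y} (hf : HasCompactSupport f) (hf_lip : LipschitzWith 1 f) :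
    ∫⁻ x, (∫⁻ t in Ioi 0, affineDeviation μ q f x t / ENNReal.ofReal (t ^ (q + 1))) ∂μ
      ≤ ENNReal.ofReal (Real.log (scaleRatio E))
        * ((2 ^ q) ^ 6 * (ENNReal.ofReal m ^ q * μ (tsupport f))) := by
  have ratio_pos : 0 < scaleRatio E := by linarith [four_le_scaleRatio E]
  have dev_meas := measurable_affineDeviation μ (by linarith : 0 ≤ q) hf_lip.continuous
  rw [lintegral_lintegral_div_swap μ dev_meas (by fun_prop)]
  refine setLIntegral_div_rpow_le_of_sum_geometric_le dev_meas.lintegral_prod_left'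
    (by linarith [four_le_scaleRatio E]) fun s hs J => ?_
  refine sum_lintegral_affineDeviation_le μ hq hm (a := fun i => s * scaleRatio E ^ i)
    (fun _ => by positivity) (fun i => ?_) hf hf_lip J
  exact (by ring : scaleRatio E * (s * scaleRatio E ^ i) = s * scaleRatio E ^ (i + 1)).le

end ScaleIntegral

section Norm

variable {E : Type*} [AddCommGroup E] [Module ℝ E] {N : E → ℝ}

lemma normedSpaceCore_of_isNorm (hN : IsNorm N) :
    letI : Norm E := ⟨N⟩
    NormedSpace.Core ℝ E := by
  obtain ⟨N_eq_zero, N_smul, N_add⟩ := hN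
  have N_zero : N 0 = 0 := by simpa using N_smul 0 0
  have N_neg : ∀ x, N (-x) = N x := fun x => by simpa using N_smul (-1) x
  have N_nonneg : ∀ x, 0 ≤ N x := fun x => by
    have := N_add x (-x)
    rw [add_neg_cancel, N_zero, N_neg] at this
    linarith
  exact letI : Norm E := ⟨N⟩
    { norm_nonneg := N_nonneg
      norm_smul := N_smul
      norm_triangle := N_add
      norm_eq_zero_iff := fun x => ⟨N_eq_zero x, fun hx => hx ▸ N_zero⟩ }

lemma topology_eq_moduleTopology_of_normedSpaceCore [Norm E] [FiniteDimensional ℝ E]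
    (core : NormedSpace.Core ℝ E) :
    (PseudoEMetricSpace.ofSeminormedSpaceCore core.toCore).toUniformSpace.toTopologicalSpace
      = moduleTopology ℝ E := by
  let := NormedAddCommGroup.ofCore core
  let := NormedSpace.ofCore core
  have := isModuleTopologyOfFiniteDimensional (𝕜 := ℝ) (E := E)
  exact eq_moduleTopology ℝ E

end Norm

section BallForm

variable {E : Type} [NormedAddCommGroup E] [NormedSpace ℝ E] [MeasurableSpace E] [BorelSpace E]
  [FiniteDimensional ℝ E] (μ : Measure E) [μ.IsAddHaarMeasure]
variable {Y : Type*} [NormedAddCommGroup Y] [NormedSpace ℝ Y]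

lemma affineDeviation_eq_iInf_closedBall (q : ℝ) {f : E → Y} (hf : Continuous f) (x : E) {t : ℝ}
    (ht : 0 < t) :
    affineDeviation μ q f x t
      = ⨅ Λ ∈ {Λ : E →ᵃ[ℝ] Y | ∀ u v, ‖Λ u - Λ v‖ ≤ ‖u - v‖},
        (∫⁻ y in closedBall x t, ‖f y - Λ y‖ₑ ^ q ∂μ) / μ (closedBall x t) := by
  refine iInf_congr fun Λ => iInf_congr fun _ => ?_
  have Λ_cont : Continuous Λ := Λ.continuous_of_finiteDimensional
  exact (setLIntegral_closedBall_div_eq_lintegral_unitBallLaw μ x ht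
    ((hf.sub Λ_cont).enorm.measurable.pow_const q)).symm

lemma mul_two_rpow_pow_mul_rpow_one_div {q m l : ℝ} (hq : 0 < q) (hl : 0 ≤ l) (V : ℝ≥0∞) :
    (ENNReal.ofReal l * ((2 ^ q) ^ 6 * (ENNReal.ofReal m ^ q * V))) ^ (1 / q)
      = ENNReal.ofReal (64 * l ^ (1 / q) * m) * V ^ (1 / q) := by
  have q_cancel : q * (1 / q) = 1 := by field_simp
  have const_eq : ((2 : ℝ≥0∞) ^ q) ^ 6 = 64 ^ q := by
    rw [← ENNReal.rpow_natCast, ← ENNReal.rpow_mul, mul_comm, ENNReal.rpow_mul,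
      ENNReal.rpow_natCast]
    norm_num
  have q_inv_nonneg : 0 ≤ 1 / q := by positivity
  simp only [const_eq, ENNReal.mul_rpow_of_nonneg _ _ q_inv_nonneg, ← ENNReal.rpow_mul, q_cancel,
    ENNReal.rpow_one, ENNReal.ofReal_rpow_of_nonneg hl q_inv_nonneg]
  rw [ENNReal.ofReal_mul (by positivity), ENNReal.ofReal_mul (by norm_num),
    ENNReal.ofReal_ofNat]
  ring

theorem lintegral_iInf_closedBall_rpow_le [CompleteSpace Y] {q m : ℝ} (hq : 2 ≤ q)
    (hm : MartCotypeBound q Y m) {f : E → Y} (hf : HasCompactSupport f)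
    (hf_lip : LipschitzWith 1 f) :
    (∫⁻ x, (∫⁻ t in Ioi (0 : ℝ),
        (⨅ Λ ∈ {Λ : E →ᵃ[ℝ] Y | ∀ u v, ‖Λ u - Λ v‖ ≤ ‖u - v‖},
          (∫⁻ y in closedBall x t, ‖f y - Λ y‖ₑ ^ q ∂μ) / μ (closedBall x t))
        / ENNReal.ofReal (t ^ (q + 1))) ∂μ) ^ (1 / q)
      ≤ ENNReal.ofReal (64 * Real.log (scaleRatio E) ^ (1 / q) * m)
        * μ (tsupport f) ^ (1 / q) := by
  have log_nonneg : 0 ≤ Real.log (scaleRatio E) :=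
    Real.log_nonneg (by linarith [four_le_scaleRatio E])
  rw [← mul_two_rpow_pow_mul_rpow_one_div (by linarith) log_nonneg]
  refine ENNReal.rpow_le_rpow ?_ (by positivity)
  refine le_of_eq_of_le (lintegral_congr fun x => ?_)
    (lintegral_affineDeviation_div_rpow_le μ hq hm hf hf_lip)
  exact setLIntegral_congr_fun measurableSet_Ioi fun t ht => by
    simp only [affineDeviation_eq_iInf_closedBall μ q hf_lip.continuous x ht]

end BallForm

lemma log_rpow_le_rpow_mul_log_rpow {x q : ℝ} (hx : 4 ≤ x) (hq : 2 ≤ q) :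
    Real.log x ^ (1 / q) ≤ x ^ ((9 : ℝ) / 20) * Real.log x ^ ((1 : ℝ) / 5) := by
  have one_le_log : 1 ≤ Real.log x := by
    rw [Real.le_log_iff_exp_le (by linarith)]
    linarith [Real.exp_one_lt_three]
  have exponent_le : 1 / q ≤ 9 / 20 + 1 / 5 := by
    rw [div_le_iff₀ (by linarith)]
    linarith
  calc Real.log x ^ (1 / q) ≤ Real.log x ^ ((9 : ℝ) / 20 + 1 / 5) :=
        Real.rpow_le_rpow_of_exponent_le one_le_log exponent_le
    _ = Real.log x ^ ((9 : ℝ) / 20) * Real.log x ^ ((1 : ℝ) / 5) :=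
        Real.rpow_add (by linarith) _ _
    _ ≤ x ^ ((9 : ℝ) / 20) * Real.log x ^ ((1 : ℝ) / 5) := by
        gcongr
        exact Real.log_le_self (by linarith)

end Dorronsoro

open Dorronsoro in
theorem statement3_general {E : Type} [AddCommGroup E] [Module ℝ E] [TopologicalSpace E]
    [IsTopologicalAddGroup E] [ContinuousSMul ℝ E] [T2Space E] [FiniteDimensional ℝ E]
    [MeasurableSpace E] [BorelSpace E] (μ : Measure E) [μ.IsAddHaarMeasure] {N : E → ℝ}
    (hN : IsNorm N) {Y : Type*} [NormedAddCommGroup Y] [NormedSpace ℝ Y] [CompleteSpace Y]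
    {q m : ℝ} (hq : 2 ≤ q) (hm : MartCotypeBound q Y m) {f : E → Y} (hf : HasCompactSupport f)
    (hf_lip : ∀ x y, ‖f x - f y‖ ≤ N (x - y)) :
    (∫⁻ x, (∫⁻ t in Ioi (0 : ℝ),
        (⨅ Λ ∈ {Λ : E →ᵃ[ℝ] Y | ∀ u v, ‖Λ u - Λ v‖ ≤ N (u - v)},
          (∫⁻ y in {y | N (y - x) ≤ t}, (‖f y - Λ y‖₊ : ℝ≥0∞) ^ q ∂μ) / μ {y | N (y - x) ≤ t})
        / ENNReal.ofReal (t ^ (q + 1))) ∂μ) ^ (1 / q)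
      ≤ ENNReal.ofReal (64 * Real.log (max 4 (Module.finrank ℝ E)) ^ (1 / q) * m)
        * μ (tsupport f) ^ (1 / q) := by
  let : Norm E := ⟨N⟩
  have core : NormedSpace.Core ℝ E := normedSpaceCore_of_isNorm hN
  have := isModuleTopologyOfFiniteDimensional (𝕜 := ℝ) (E := E)
  let : NormedAddCommGroup E :=
    NormedAddCommGroup.ofCoreReplaceTopology core <|
      (eq_moduleTopology ℝ E).trans (topology_eq_moduleTopology_of_normedSpaceCore core).symm
  let : NormedSpace ℝ E := NormedSpace.ofCore core
  have closedBall_eq : ∀ (x : E) (t : ℝ), closedBall x t = {y | N (y - x) ≤ t} := fun x t => by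
    ext y
    exact mem_closedBall_iff_norm
  have bound := lintegral_iInf_closedBall_rpow_le μ hq hm hf
    (lipschitzWith_iff_norm_sub_le.2 fun x y => by
      simpa only [NNReal.coe_one, one_mul] using! hf_lip x y)
  simp only [closedBall_eq] at bound
  exact bound

/-- **Theorem (intrinsic vector-valued Dorronsoro estimate).** For `q ∈ [2,∞)`, `n ≥ q²`,
an `n`-dimensional normed space `X = (ℝⁿ, N)` and a Banach space `Y` of martingale cotype `q`
(with constant `m`), every compactly supported `1`-Lipschitz `f : X → Y` satisfies
`(∫_X ∫_0^∞ inf_{Λ affine, ‖Λ‖_Lip ≤ 1} ⨍_{x+tB_X} ‖f-Λ‖^q/t^{q+1} dy dt dx)^{1/q}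
  ≤ C n^{9/20} (log n)^{1/5} 𝔪_q(Y) |supp f|^{1/q}`. -/
theorem statement3 :
    ∃ C : ℝ, 0 < C ∧
      ∀ (q : ℝ), 2 ≤ q → ∀ (n : ℕ), 0 < n → q ^ 2 ≤ (n : ℝ) →
      ∀ (N : EuclideanSpace ℝ (Fin n) → ℝ), IsNorm N →
      ∀ (Y : Type u) [NormedAddCommGroup Y] [NormedSpace ℝ Y] [CompleteSpace Y],
      ∀ m : ℝ, 0 ≤ m → MartCotypeBound q Y m →
      ∀ f : EuclideanSpace ℝ (Fin n) → Y,
        HasCompactSupport f → (∀ x y, ‖f x - f y‖ ≤ N (x - y)) →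
        (∫⁻ x, ∫⁻ t in Set.Ioi (0 : ℝ),
            (⨅ Λ ∈ {Λ : EuclideanSpace ℝ (Fin n) →ᵃ[ℝ] Y | ∀ u v, ‖Λ u - Λ v‖ ≤ N (u - v)},
                (∫⁻ y in {y : EuclideanSpace ℝ (Fin n) | N (y - x) ≤ t},
                    (‖f y - Λ y‖₊ : ℝ≥0∞) ^ q)
                  / volume {y : EuclideanSpace ℝ (Fin n) | N (y - x) ≤ t})
              / ENNReal.ofReal (t ^ (q + 1))) ^ (1 / q)
          ≤ ENNReal.ofReal
              (C * (n : ℝ) ^ ((9 : ℝ) / 20) * Real.log n ^ ((1 : ℝ) / 5) * m)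
              * volume (tsupport f) ^ (1 / q) := by
  refine ⟨64, by norm_num, fun q hq n _ hqn N hN Y _ _ _ m hm_nonneg hm f hf hf_lip => ?_⟩
  have four_le_n : 4 ≤ (n : ℝ) := by nlinarith
  refine (statement3_general volume hN hq hm hf hf_lip).trans ?_
  rw [finrank_euclideanSpace_fin, max_eq_right four_le_n, mul_assoc 64 ((n : ℝ) ^ (9 / 20 : ℝ))]
  gcongr
  exact Dorronsoro.log_rpow_le_rpow_mul_log_rpow four_le_n hq
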